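/- arXiv:2210.03545 — 7 statements merged into one kernel-verified Lean document; each statement's English description precedes it below -/
import Mathlib

section
/- There exists a constant c > 0 such that for all sufficiently large n, r(K_4^(3) − e, S_n) ≥ c·n²/(log n)²; that is, there exists a 2-coloring of K_N^(3) with N = ⌊c·n²/(log n)²⌋ that contains no red copy of K_4^(3) − e and no blue copy of S_n. -/
/-!
A 2-coloring of `K_N^(3)` is `χ : Finset (Fin N) → Bool`, read on 3-element subsets,
with `true` = red and `false` = blue.
-/

/-- A red copy of `K₄⁽³⁾ − e`: a 4-element vertex set with at least three of its four
3-element subsets red. -/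
def HasRedK4e (N : ℕ) (χ : Finset (Fin N) → Bool) : Prop :=
  ∃ S : Finset (Fin N), S.card = 4 ∧
    3 ≤ ((S.powersetCard 3).filter fun T => χ T = true).card

/-- A blue copy of the star `Sₙ`: a vertex `v` and an `n`-element set `S` with `v ∉ S`
such that every triple `{v, a, b}` with `a ≠ b` in `S` is blue. -/
def HasBlueStar (N n : ℕ) (χ : Finset (Fin N) → Bool) : Prop :=
  ∃ v : Fin N, ∃ S : Finset (Fin N), v ∉ S ∧ S.card = n ∧
    ∀ a ∈ S, ∀ b ∈ S, a ≠ b → χ {v, a, b} = false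

/-!
Already the star `S₃`, a vertex `v` with the three triples `{v, a, b}`, `a, b ∈ S`, `|S| = 3`, is
contained in `K₄⁽³⁾ − e`, so it suffices to avoid a red `S₃` and a blue `Sₙ`. Color every triple
red independently with probability `p = 20 log n / n`. A given star `S₃` is red with probability
`p³` and shares a triple with `O(N)` other copies of `S₃`; a given `Sₙ` is blue with probability at
most `exp(-p (n choose 2)) = n ^ (-10 (n - 1))`, which beats the number `N ^ (n + 1)` of all copies.
The asymmetric local lemma with weights `4p³` for the red stars and `1 / (2 #copies)` for the blue
ones then applies as long as `p² N` is bounded by a small constant, i.e. up to `N` of order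
`n² / log² n`.
-/

open Finset MeasureTheory ProbabilityTheory

/-! ### The Lovász local lemma -/

section LocalLemma

variable {Ω ι : Type*}

/-- The event that none of the bad events `A j`, `j ∈ S`, occurs. -/
def avoiding (A : ι → Set Ω) (S : Finset ι) : Set Ω := ⋂ j ∈ S, (A j)ᶜ

lemma mem_avoiding {A : ι → Set Ω} {S : Finset ι} {ω : Ω} :
    ω ∈ avoiding A S ↔ ∀ j ∈ S, ω ∉ A j := by
  simp [avoiding]

lemma avoiding_anti {A : ι → Set Ω} {S T : Finset ι} (h : S ⊆ T) : avoiding A T ⊆ avoiding A S :=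
  Set.biInter_subset_biInter_left h

lemma avoiding_insert [DecidableEq ι] (A : ι → Set Ω) (i : ι) (S : Finset ι) :
    avoiding A (insert i S) = avoiding A S \ A i := by
  ext ω
  simp [mem_avoiding, and_comm]

lemma prod_mul_le_of_mul_le_insert {R : Type*} [CommMonoidWithZero R] [Preorder R] [PosMulMono R]
    [DecidableEq ι] {f : Finset ι → R} {w : ι → R} {U W : Finset ι} (hw : ∀ i ∈ U, 0 ≤ w i)
    (hUW : Disjoint U W)
    (hf : ∀ i ∈ U, ∀ T ⊆ U ∪ W, i ∉ T → w i * f T ≤ f (insert i T)) :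
    (∏ i ∈ U, w i) * f W ≤ f (U ∪ W) := by
  induction U using Finset.induction_on with
  | empty => simp
  | insert a U ha ih =>
    obtain ⟨haW, hUW⟩ := disjoint_insert_left.1 hUW
    have hsub : U ∪ W ⊆ insert a U ∪ W := union_subset_union_left (subset_insert a U)
    have hrest : (∏ i ∈ U, w i) * f W ≤ f (U ∪ W) :=
      ih (fun i hi ↦ hw i (mem_insert_of_mem hi)) hUW
        fun i hi T hT ↦ hf i (mem_insert_of_mem hi) T (hT.trans hsub)
    calc (∏ i ∈ insert a U, w i) * f W
      _ = w a * ((∏ i ∈ U, w i) * f W) := by rw [prod_insert ha, mul_assoc]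
      _ ≤ w a * f (U ∪ W) := mul_le_mul_of_nonneg_left hrest (hw a (mem_insert_self a U))
      _ ≤ f (insert a (U ∪ W)) := hf a (mem_insert_self a U) _ hsub (by simp [ha, haW])
      _ = f (insert a U ∪ W) := by rw [insert_union]

variable [MeasurableSpace Ω] {μ : Measure Ω} {A : ι → Set Ω} {x : ι → ℝ}

lemma measurableSet_avoiding (hA : ∀ i, MeasurableSet (A i)) (S : Finset ι) :
    MeasurableSet (avoiding A S) :=
  S.measurableSet_biInter fun j _ ↦ (hA j).compl

variable [IsProbabilityMeasure μ]

lemma measureReal_inter_avoiding_le [DecidableEq ι] (hA : ∀ i, MeasurableSet (A i))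
    (hx : ∀ i, x i ∈ Set.Icc 0 1) {i : ι} {S nb : Finset ι}
    (hind : IndepSet (A i) (avoiding A (S \ nb)) μ)
    (hp : μ.real (A i) ≤ x i * ∏ j ∈ nb, (1 - x j))
    (hprod : (∏ j ∈ S ∩ nb, (1 - x j)) * μ.real (avoiding A (S \ nb)) ≤ μ.real (avoiding A S)) :
    μ.real (A i ∩ avoiding A S) ≤ x i * μ.real (avoiding A S) := by
  have hprod_le : ∏ j ∈ nb, (1 - x j) ≤ ∏ j ∈ S ∩ nb, (1 - x j) :=
    prod_le_prod_of_subset_of_le_one inter_subset_right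
      (fun j _ ↦ sub_nonneg.2 (hx j).2) fun j _ _ ↦ sub_le_self 1 (hx j).1
  calc μ.real (A i ∩ avoiding A S)
    _ ≤ μ.real (A i ∩ avoiding A (S \ nb)) :=
        measureReal_mono (Set.inter_subset_inter_right _ (avoiding_anti sdiff_subset))
    _ = μ.real (A i) * μ.real (avoiding A (S \ nb)) := by
        simp only [Measure.real, ← ENNReal.toReal_mul, (indepSet_iff_measure_inter_eq_mul (hA i)
          (measurableSet_avoiding hA _) μ).1 hind]
    _ ≤ x i * (∏ j ∈ S ∩ nb, (1 - x j)) * μ.real (avoiding A (S \ nb)) := by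
        gcongr
        exact hp.trans (mul_le_mul_of_nonneg_left hprod_le (hx i).1)
    _ ≤ x i * μ.real (avoiding A S) := by
        rw [mul_assoc]
        exact mul_le_mul_of_nonneg_left hprod (hx i).1

lemma one_sub_mul_measureReal_avoiding_le [DecidableEq ι]
    (hA : ∀ i, MeasurableSet (A i)) (nb : ι → Finset ι) (hx : ∀ i, x i ∈ Set.Icc 0 1)
    (hind : ∀ i S, i ∉ S → Disjoint S (nb i) → IndepSet (A i) (avoiding A S) μ)
    (hp : ∀ i, μ.real (A i) ≤ x i * ∏ j ∈ nb i, (1 - x j)) {i : ι} {S : Finset ι} (hi : i ∉ S) :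
    (1 - x i) * μ.real (avoiding A S) ≤ μ.real (avoiding A (insert i S)) := by
  induction S using Finset.strongInduction generalizing i with
  | H S ih =>
    have hS : S ∩ nb i ∪ S \ nb i = S := by rw [union_comm, sdiff_union_inter]
    have hprod : (∏ j ∈ S ∩ nb i, (1 - x j)) * μ.real (avoiding A (S \ nb i)) ≤
        μ.real (avoiding A (S ∩ nb i ∪ S \ nb i)) := by
      refine prod_mul_le_of_mul_le_insert (f := fun T ↦ μ.real (avoiding A T))
        (fun j _ ↦ sub_nonneg.2 (hx j).2) (disjoint_sdiff_inter S (nb i)).symm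
        fun j hj T hT hjT ↦ ?_
      rw [hS] at hT
      exact ih T (hT.ssubset_of_mem_notMem (mem_of_mem_inter_left hj) hjT) hjT
    rw [hS] at hprod
    have hbad : μ.real (A i ∩ avoiding A S) ≤ x i * μ.real (avoiding A S) :=
      measureReal_inter_avoiding_le hA hx
        (hind i _ (fun h ↦ hi (sdiff_subset h)) sdiff_disjoint) (hp i) hprod
    have hsplit := measureReal_inter_add_sdiff (μ := μ) (s := avoiding A S) (hA i)
    rw [Set.inter_comm] at hsplit
    rw [avoiding_insert]
    linarith

theorem prod_one_sub_le_measureReal_avoiding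
    (hA : ∀ i, MeasurableSet (A i)) (nb : ι → Finset ι) (hx : ∀ i, x i ∈ Set.Icc 0 1)
    (hind : ∀ i S, i ∉ S → Disjoint S (nb i) → IndepSet (A i) (avoiding A S) μ)
    (hp : ∀ i, μ.real (A i) ≤ x i * ∏ j ∈ nb i, (1 - x j)) (S : Finset ι) :
    ∏ i ∈ S, (1 - x i) ≤ μ.real (avoiding A S) := by
  classical
  have h := prod_mul_le_of_mul_le_insert (f := fun T ↦ μ.real (avoiding A T))
    (fun i _ ↦ sub_nonneg.2 (hx i).2) (disjoint_empty_right S)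
    fun i _ T _ ↦ one_sub_mul_measureReal_avoiding_le hA nb hx hind hp
  simpa [avoiding] using h

theorem exists_forall_notMem_of_measureReal_le [Finite ι]
    (hA : ∀ i, MeasurableSet (A i)) (nb : ι → Finset ι) (hx : ∀ i, x i ∈ Set.Ico 0 1)
    (hind : ∀ i S, i ∉ S → Disjoint S (nb i) → IndepSet (A i) (avoiding A S) μ)
    (hp : ∀ i, μ.real (A i) ≤ x i * ∏ j ∈ nb i, (1 - x j)) :
    ∃ ω, ∀ i, ω ∉ A i := by
  cases nonempty_fintype ι
  have hpos : 0 < μ.real (avoiding A univ) :=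
    (prod_pos fun i _ ↦ sub_pos.2 (hx i).2).trans_le <| prod_one_sub_le_measureReal_avoiding hA nb
      (fun i ↦ Set.Ico_subset_Icc_self (hx i)) hind hp univ
  obtain ⟨ω, hω⟩ := nonempty_of_measureReal_ne_zero hpos.ne'
  exact ⟨ω, fun i ↦ mem_avoiding.1 hω i (mem_univ i)⟩

end LocalLemma

section ProductSpace

variable {E ι : Type*} {X : E → Type*}

lemma dependsOn_mem_avoiding [DecidableEq E] {A : ι → Set (Π e, X e)} {supp : ι → Finset E}
    (hdep : ∀ i, DependsOn (· ∈ A i) (supp i : Set E)) (S : Finset ι) :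
    DependsOn (· ∈ avoiding A S) (S.biUnion supp : Set E) := by
  intro f g hfg
  simp only [mem_avoiding]
  refine propext <| forall₂_congr fun j hj ↦ not_congr <| iff_of_eq <| hdep j fun e he ↦ hfg e ?_
  exact mem_coe.2 (mem_biUnion.2 ⟨j, hj, he⟩)

variable [∀ e, MeasurableSpace (X e)]

lemma exists_measurableSet_preimage_restrict_eq [∀ e, Nonempty (X e)]
    {A : Set (Π e, X e)} {s : Finset E} (hA : MeasurableSet A)
    (hdep : DependsOn (· ∈ A) (s : Set E)) :
    ∃ B : Set (Π e : s, X e), MeasurableSet B ∧ s.restrict ⁻¹' B = A := by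
  classical
  let f₀ : Π e, X e := fun _ ↦ Classical.arbitrary _
  refine ⟨Function.updateFinset f₀ s ⁻¹' A, measurable_updateFinset hA, ?_⟩
  ext f
  refine iff_of_eq <| hdep fun e he ↦ ?_
  simp [Function.updateFinset, mem_coe.1 he]

variable [Fintype E] (ν : Π e, Measure (X e)) [∀ e, IsProbabilityMeasure (ν e)]

lemma indepSet_pi_of_dependsOn {A B : Set (Π e, X e)} {s t : Finset E} (hA : MeasurableSet A)
    (hB : MeasurableSet B) (hst : Disjoint s t) (hAs : DependsOn (· ∈ A) (s : Set E))
    (hBt : DependsOn (· ∈ B) (t : Set E)) : IndepSet A B (Measure.pi ν) := by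
  have : ∀ e, Nonempty (X e) := fun e ↦ nonempty_of_isProbabilityMeasure (ν e)
  obtain ⟨A', hA', rfl⟩ := exists_measurableSet_preimage_restrict_eq hA hAs
  obtain ⟨B', hB', rfl⟩ := exists_measurableSet_preimage_restrict_eq hB hBt
  have hindep : IndepFun s.restrict t.restrict (Measure.pi ν) :=
    (iIndepFun_pi (X := fun _ ↦ id) fun _ ↦ aemeasurable_id).indepFun_finset s t hst
      measurable_pi_apply
  exact (indepFun_iff_indepSet_preimage (measurable_restrict s) (measurable_restrict t)).1
    hindep A' B' hA' hB'

theorem exists_forall_notMem_of_dependsOn [DecidableEq E] [Fintype ι] {A : ι → Set (Π e, X e)}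
    (hA : ∀ i, MeasurableSet (A i)) (supp : ι → Finset E)
    (hdep : ∀ i, DependsOn (· ∈ A i) (supp i : Set E)) {x : ι → ℝ}
    (hx : ∀ i, x i ∈ Set.Ico 0 1)
    (hp : ∀ i, (Measure.pi ν).real (A i) ≤
      x i * ∏ j with ¬ Disjoint (supp i) (supp j), (1 - x j)) :
    ∃ f, ∀ i, f ∉ A i := by
  classical
  refine exists_forall_notMem_of_measureReal_le hA _ hx (fun i S _ hS ↦ ?_) hp
  refine indepSet_pi_of_dependsOn ν (hA i) (measurableSet_avoiding hA S) ?_ (hdep i)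
    (dependsOn_mem_avoiding hdep S)
  rw [disjoint_biUnion_right]
  intro j hj
  simpa using Finset.disjoint_left.1 hS hj

end ProductSpace

/-! ### Two-colorings of pairs of hypergraphs -/

section Hypergraph

variable {E α β : Type*}

/-- The event that a coloring of `E` takes only the value `c` on `T`. -/
def monochromatic {C : Type*} (T : Finset E) (c : C) : Set (E → C) := {χ | ∀ e ∈ T, χ e = c}

lemma dependsOn_mem_monochromatic {C : Type*} (T : Finset E) (c : C) :
    DependsOn (· ∈ monochromatic T c) (T : Set E) :=
  fun _ _ h ↦ propext <| forall₂_congr fun e he ↦ by rw [h e he]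

lemma measureReal_pi_monochromatic [Fintype E] {C : Type*} [MeasurableSpace C] (ν : Measure C)
    [IsProbabilityMeasure ν] (T : Finset E) (c : C) :
    (Measure.pi fun _ : E ↦ ν).real (monochromatic T c) = ν.real {c} ^ #T := by
  have : monochromatic T c = (T : Set E).pi fun _ ↦ {c} := rfl
  simp [this, Measure.real, Measure.pi_pi_finset]

lemma card_filter_not_disjoint_le [DecidableEq E] [Fintype α] {F : α → Finset E} {D : ℕ}
    (hD : ∀ e, #{a | e ∈ F a} ≤ D) (T : Finset E) : #{a | ¬ Disjoint T (F a)} ≤ #T * D := by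
  classical
  have hsub : ({a | ¬ Disjoint T (F a)} : Finset α) ⊆ T.biUnion fun e ↦ {a | e ∈ F a} := by
    intro a
    simp [not_disjoint_iff]
  exact (card_le_card hsub).trans (card_biUnion_le_card_mul _ _ _ fun e _ ↦ hD e)

lemma pow_mul_pow_le_prod_not_disjoint [DecidableEq E] [Fintype α] [Fintype β]
    {F : α → Finset E} (G : β → Finset E) {x y : ℝ} {D : ℕ} (hx : x ∈ Set.Icc 0 1)
    (hy : y ∈ Set.Icc 0 1) (hD : ∀ e, #{a | e ∈ F a} ≤ D) (T : Finset E) :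
    (1 - x) ^ (#T * D) * (1 - y) ^ Fintype.card β ≤
      ∏ i with ¬ Disjoint T (Sum.elim F G i), (1 - Sum.elim (fun _ ↦ x) (fun _ ↦ y) i) := by
  have hx0 : 0 ≤ 1 - x := sub_nonneg.2 hx.2
  have hy0 : 0 ≤ 1 - y := sub_nonneg.2 hy.2
  calc (1 - x) ^ (#T * D) * (1 - y) ^ Fintype.card β
    _ ≤ (1 - x) ^ #{a | ¬ Disjoint T (F a)} * (1 - y) ^ #{b | ¬ Disjoint T (G b)} := by
        gcongr ?_ * ?_
        · exact pow_le_pow_of_le_one hx0 (sub_le_self 1 hx.1) (card_filter_not_disjoint_le hD T)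
        · exact pow_le_pow_of_le_one hy0 (sub_le_self 1 hy.1) (card_filter_le _ _)
    _ = ∏ i with ¬ Disjoint T (Sum.elim F G i), (1 - Sum.elim (fun _ ↦ x) (fun _ ↦ y) i) := by
        rw [← prod_const, ← prod_const, prod_filter, prod_filter, prod_filter,
          Fintype.prod_sum_type]
        rfl

variable [Finite E] [DecidableEq E] [Fintype α] [Fintype β] {F : α → Finset E} {G : β → Finset E}
  {p : ℝ} {D : ℕ}

theorem exists_coloring_of_weights {x y : ℝ} (hp : p ∈ Set.Icc 0 1) (hx : x ∈ Set.Ico 0 1)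
    (hy : y ∈ Set.Ico 0 1) (hD : ∀ e, #{a | e ∈ F a} ≤ D)
    (hF : ∀ a, p ^ #(F a) ≤ x * ((1 - x) ^ (#(F a) * D) * (1 - y) ^ Fintype.card β))
    (hG : ∀ b, (1 - p) ^ #(G b) ≤ y * ((1 - x) ^ (#(G b) * D) * (1 - y) ^ Fintype.card β)) :
    ∃ χ : E → Bool, (∀ a, ∃ e ∈ F a, χ e = false) ∧ ∀ b, ∃ e ∈ G b, χ e = true := by
  cases nonempty_fintype E
  let A : α ⊕ β → Set (E → Bool) :=
    Sum.elim (fun a ↦ monochromatic (F a) true) fun b ↦ monochromatic (G b) false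
  let ν := bernoulliMeasure true false ⟨p, hp⟩
  have hprod := pow_mul_pow_le_prod_not_disjoint (F := F) G (Set.Ico_subset_Icc_self hx)
    (Set.Ico_subset_Icc_self hy) hD
  obtain ⟨χ, hχ⟩ : ∃ χ, ∀ i, χ ∉ A i := by
    refine exists_forall_notMem_of_dependsOn (fun _ : E ↦ ν) (supp := Sum.elim F G)
      (x := Sum.elim (fun _ ↦ x) fun _ ↦ y) (fun i ↦ (Set.toFinite _).measurableSet) ?_ ?_ ?_
    · rintro (a | b) <;> exact dependsOn_mem_monochromatic _ _
    · rintro (_ | _) <;> assumption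
    · rintro (a | b)
      · refine (le_of_eq ?_).trans ((hF a).trans (mul_le_mul_of_nonneg_left (hprod (F a)) hx.1))
        simp [A, ν, measureReal_pi_monochromatic]
      · refine (le_of_eq ?_).trans ((hG b).trans (mul_le_mul_of_nonneg_left (hprod (G b)) hy.1))
        simp [A, ν, measureReal_pi_monochromatic]
  refine ⟨χ, fun a ↦ ?_, fun b ↦ ?_⟩
  · simpa [A, monochromatic] using hχ (.inl a)
  · simpa [A, monochromatic] using hχ (.inr b)

lemma half_le_one_sub_pow {x : ℝ} {n : ℕ} (hx : x ≤ 2) (hn : n * x ≤ 1 / 2) :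
    1 / 2 ≤ (1 - x) ^ n := by
  have := one_add_mul_le_pow (neg_le_neg hx) n
  rw [← sub_eq_add_neg] at this
  linarith

lemma exp_neg_two_mul_le_one_sub {x : ℝ} (h₀ : 0 ≤ x) (h₁ : x ≤ 1 / 2) :
    Real.exp (-(2 * x)) ≤ 1 - x := by
  rw [Real.exp_neg, inv_le_comm₀ (Real.exp_pos _) (by linarith)]
  calc (1 - x)⁻¹ ≤ 2 * x + 1 := by
        rw [inv_le_iff_one_le_mul₀ (by linarith)]
        nlinarith
    _ ≤ Real.exp (2 * x) := Real.add_one_le_exp _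

lemma exp_neg_half_mul_le_one_sub_pow {p x : ℝ} {m D : ℕ} (h₀ : 0 ≤ x) (h₁ : x ≤ 1 / 2)
    (hD : 4 * D * x ≤ p) : Real.exp (-(p * m / 2)) ≤ (1 - x) ^ (m * D) :=
  calc Real.exp (-(p * m / 2))
    _ ≤ Real.exp ((m * D : ℕ) * -(2 * x)) := by
        rw [Real.exp_le_exp]
        push_cast
        nlinarith [mul_le_mul_of_nonneg_left hD (Nat.cast_nonneg m)]
    _ = Real.exp (-(2 * x)) ^ (m * D) := Real.exp_nat_mul _ _
    _ ≤ (1 - x) ^ (m * D) := by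
        gcongr
        exact exp_neg_two_mul_le_one_sub h₀ h₁

lemma one_sub_pow_le_exp_neg_half_sq {p : ℝ} (hp : p ≤ 1) (m : ℕ) :
    (1 - p) ^ m ≤ Real.exp (-(p * m / 2)) * Real.exp (-(p * m / 2)) :=
  calc (1 - p) ^ m
    _ ≤ Real.exp (-p) ^ m :=
        pow_le_pow_left₀ (sub_nonneg.2 hp) (Real.one_sub_le_exp_neg p) m
    _ = Real.exp (-(p * m / 2)) * Real.exp (-(p * m / 2)) := by
        rw [← Real.exp_nat_mul, ← Real.exp_add]
        ring_nf

theorem exists_coloring_of_uniform {k m : ℕ} (hp : p ∈ Set.Icc 0 1) (hFk : ∀ a, #(F a) = k)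
    (hGm : ∀ b, #(G b) = m) (hD : ∀ e, #{a | e ∈ F a} ≤ D) (hpk : 8 * p ^ k ≤ 1)
    (hkD : 8 * (k * D) * p ^ k ≤ 1) (hpD : 16 * D * p ^ k ≤ p)
    (hβ : 4 * Fintype.card β ≤ Real.exp (p * m / 2)) :
    ∃ χ : E → Bool, (∀ a, ∃ e ∈ F a, χ e = false) ∧ ∀ b, ∃ e ∈ G b, χ e = true := by
  set x : ℝ := 4 * p ^ k
  set y : ℝ := (Fintype.card β : ℝ)⁻¹ / 2 with hy_def
  have hpk0 : 0 ≤ p ^ k := pow_nonneg hp.1 k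
  have hx0 : 0 ≤ x := by positivity
  have hx1 : x ≤ 1 / 2 := by linarith
  have hy0 : 0 ≤ y := by positivity
  have hy1 : y ≤ 1 / 2 := by
    linarith [Nat.cast_inv_le_one (α := ℝ) (Fintype.card β)]
  have hxk : 1 / 2 ≤ (1 - x) ^ (k * D) :=
    half_le_one_sub_pow (by linarith) (by push_cast; linarith)
  have hyβ : 1 / 2 ≤ (1 - y) ^ Fintype.card β :=
    half_le_one_sub_pow (by linarith) <| by
      rw [hy_def]
      linarith [mul_inv_le_one (a := (Fintype.card β : ℝ))]
  have hxm : Real.exp (-(p * m / 2)) ≤ (1 - x) ^ (m * D) :=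
    exp_neg_half_mul_le_one_sub_pow hx0 hx1 (by linarith)
  refine exists_coloring_of_weights hp ⟨hx0, by linarith⟩ ⟨hy0, by linarith⟩ hD
    (fun a ↦ ?_) fun b ↦ ?_
  · rw [hFk a]
    calc p ^ k = x * (1 / 2 * (1 / 2)) := by ring
      _ ≤ x * ((1 - x) ^ (k * D) * (1 - y) ^ Fintype.card β) := by gcongr
  · have hβ0 : (0 : ℝ) < Fintype.card β := by exact_mod_cast Fintype.card_pos_iff.2 ⟨b⟩
    have hy : Real.exp (-(p * m / 2)) ≤ y / 2 := by
      rw [Real.exp_neg, inv_le_comm₀ (Real.exp_pos _) (by positivity)]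
      calc (y / 2)⁻¹ = 4 * Fintype.card β := by rw [hy_def]; field_simp; norm_num
        _ ≤ Real.exp (p * m / 2) := hβ
    rw [hGm b]
    calc (1 - p) ^ m
      _ ≤ Real.exp (-(p * m / 2)) * Real.exp (-(p * m / 2)) :=
          one_sub_pow_le_exp_neg_half_sq hp.2 m
      _ ≤ y / 2 * (1 - x) ^ (m * D) := by gcongr
      _ = y * ((1 - x) ^ (m * D) * (1 / 2)) := by ring
      _ ≤ y * ((1 - x) ^ (m * D) * (1 - y) ^ Fintype.card β) := by
          have : 0 ≤ (1 - x) ^ (m * D) := (Real.exp_pos _).le.trans hxm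
          gcongr

end Hypergraph

/-! ### Stars -/

section Star

variable {V : Type*} [DecidableEq V]

/-- The edges `{v, a, b}`, `a ≠ b` in `S`, of the star with center `v` and leaf set `S`. The
intended case is `v ∉ S`. -/
def starTriples (v : V) (S : Finset V) : Finset (Finset V) := (S.powersetCard 2).image (insert v)

lemma mem_starTriples {v : V} {S e : Finset V} (hv : v ∉ S) :
    e ∈ starTriples v S ↔ v ∈ e ∧ e ⊆ insert v S ∧ #e = 3 := by
  simp only [starTriples, mem_image, mem_powersetCard]
  constructor
  · rintro ⟨P, ⟨hPS, hP⟩, rfl⟩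
    exact ⟨mem_insert_self v P, insert_subset_insert v hPS,
      by rw [card_insert_of_notMem fun h ↦ hv (hPS h), hP]⟩
  · rintro ⟨hve, heS, he⟩
    exact ⟨e.erase v, ⟨subset_insert_iff.1 heS, by rw [card_erase_of_mem hve, he]⟩,
      insert_erase hve⟩

lemma card_starTriples {v : V} {S : Finset V} (hv : v ∉ S) :
    #(starTriples v S) = (#S).choose 2 := by
  rw [starTriples, card_image_of_injOn, card_powersetCard]
  refine insert_erase_invOn.2.injOn.mono fun P hP ↦ ?_
  exact notMem_mono (mem_powersetCard.1 hP).1 hv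

/-- The copies of the star `S_k` in the complete 3-uniform hypergraph on `V`, given as pairs of a
center and a set of `k` leaves. -/
abbrev StarCopy (V : Type*) (k : ℕ) : Type _ := {q : V × Finset V // q.1 ∉ q.2 ∧ #q.2 = k}

/-- The edge set of a copy of `S_k`. -/
def StarCopy.triples {k : ℕ} (q : StarCopy V k) : Finset (Finset V) := starTriples q.1.1 q.1.2

lemma StarCopy.card_triples {k : ℕ} (q : StarCopy V k) : #q.triples = k.choose 2 := by
  rw [triples, card_starTriples q.2.1, q.2.2]

lemma sdiff_union_erase_of_subset_insert {v : V} {S e : Finset V} (hv : v ∉ S)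
    (he : e ⊆ insert v S) : S \ e ∪ e.erase v = S := by
  ext a
  have := @he a
  grind

variable [Fintype V]

lemma card_starCopy_le (k : ℕ) : Fintype.card (StarCopy V k) ≤ Fintype.card V ^ (k + 1) := by
  have hsub : ({q | q.1 ∉ q.2 ∧ #q.2 = k} : Finset (V × Finset V)) ⊆ univ ×ˢ powersetCard k univ :=
    fun q ↦ by simp +contextual [mem_powersetCard]
  calc Fintype.card (StarCopy V k)
    _ ≤ #((univ : Finset V) ×ˢ powersetCard k univ) := by
        rw [Fintype.card_subtype]
        exact card_le_card hsub
    _ = Fintype.card V * (Fintype.card V).choose k := by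
        rw [card_product, card_powersetCard, card_univ]
    _ ≤ Fintype.card V ^ (k + 1) := by
        rw [pow_succ']
        exact Nat.mul_le_mul_left _ (Nat.choose_le_pow _ k)

/-- A star through `e` is determined by its center, one of the three elements of `e`, and by its
leaves outside `e`. -/
lemma card_starCopy_mem_triples_le (k : ℕ) (e : Finset V) :
    #{q : StarCopy V (k + 2) | e ∈ q.triples} ≤ 3 * (Fintype.card V).choose k := by
  by_cases he : #e = 3
  · rw [← he, ← card_univ, ← card_powersetCard, ← card_product]
    refine card_le_card_of_injOn (fun q ↦ (q.1.1, q.1.2 \ e)) ?_ ?_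
    · rintro ⟨⟨v, S⟩, hv, hS⟩ hq
      obtain ⟨hve, heS, -⟩ := (mem_starTriples hv).1 (mem_filter.1 hq).2
      have hcard : #(S \ e) + #(e.erase v) = k + 2 := by
        rw [← card_union_of_disjoint (sdiff_disjoint.mono_right (erase_subset v e)),
          sdiff_union_erase_of_subset_insert hv heS, hS]
      rw [card_erase_of_mem hve, he] at hcard
      simp only [mem_coe, mem_product, mem_powersetCard_univ]
      exact ⟨hve, by omega⟩
    · rintro ⟨⟨v, S⟩, hv, hS⟩ hq ⟨⟨w, T⟩, hw, hT⟩ hq' h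
      have heS : e ⊆ insert v S := ((mem_starTriples hv).1 (mem_filter.1 hq).2).2.1
      have heT : e ⊆ insert w T := ((mem_starTriples hw).1 (mem_filter.1 hq').2).2.1
      obtain ⟨rfl, hST⟩ : v = w ∧ S \ e = T \ e := Prod.mk.inj h
      have : S = T :=
        calc S = S \ e ∪ e.erase v := (sdiff_union_erase_of_subset_insert hv heS).symm
          _ = T \ e ∪ e.erase v := by rw [hST]
          _ = T := sdiff_union_erase_of_subset_insert hw heT
      exact Subtype.ext (Prod.ext rfl this)
  · rw [filter_false_of_mem]
    · simp
    · exact fun q _ hq ↦ he ((mem_starTriples q.2.1).1 hq).2.2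

end Star

section Coloring

variable {N n : ℕ} {χ : Finset (Fin N) → Bool}

lemma exists_mem_forall_red_of_card_eq_four {S : Finset (Fin N)} (hS : #S = 4)
    (hred : 3 ≤ #{T ∈ S.powersetCard 3 | χ T = true}) :
    ∃ v ∈ S, ∀ T ∈ S.powersetCard 3, v ∈ T → χ T = true := by
  by_cases hblue : ∃ B ∈ S.powersetCard 3, ¬ χ B = true
  · obtain ⟨B, hB, hχB⟩ := hblue
    have hle : #{T ∈ S.powersetCard 3 | ¬ χ T = true} ≤ 1 := by
      have := card_filter_add_card_filter_not (s := S.powersetCard 3) (χ · = true)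
      rw [card_powersetCard, hS, show Nat.choose 4 3 = 4 from rfl] at this
      omega
    obtain ⟨v, hvS, hvB⟩ : ∃ v ∈ S, v ∉ B :=
      exists_mem_notMem_of_card_lt_card (by rw [(mem_powersetCard.1 hB).2, hS]; norm_num)
    refine ⟨v, hvS, fun T hT hvT ↦ by_contra fun hχT ↦ hvB ?_⟩
    rwa [← card_le_one.1 hle T (mem_filter.2 ⟨hT, hχT⟩) B (mem_filter.2 ⟨hB, hχB⟩)]
  · push Not at hblue
    obtain ⟨v, hv⟩ : S.Nonempty := card_pos.1 (by omega)
    exact ⟨v, hv, fun T hT _ ↦ hblue T hT⟩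

lemma HasRedK4e.exists_red_star (h : HasRedK4e N χ) :
    ∃ q : StarCopy (Fin N) 3, ∀ e ∈ q.triples, χ e = true := by
  obtain ⟨S, hS, hred⟩ := h
  obtain ⟨v, hvS, hv⟩ := exists_mem_forall_red_of_card_eq_four hS hred
  refine ⟨⟨(v, S.erase v), notMem_erase v S, by rw [card_erase_of_mem hvS, hS]⟩, fun e he ↦ ?_⟩
  obtain ⟨hve, heS, he3⟩ := (mem_starTriples (notMem_erase v S)).1 he
  rw [insert_erase hvS] at heS
  exact hv e (mem_powersetCard.2 ⟨heS, he3⟩) hve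

lemma HasBlueStar.exists_blue_star (h : HasBlueStar N n χ) :
    ∃ q : StarCopy (Fin N) n, ∀ e ∈ q.triples, χ e = false := by
  obtain ⟨v, S, hv, hS, hblue⟩ := h
  refine ⟨⟨(v, S), hv, hS⟩, fun e he ↦ ?_⟩
  obtain ⟨P, hP, rfl⟩ := mem_image.1 he
  obtain ⟨hPS, hP2⟩ := mem_powersetCard.1 hP
  obtain ⟨a, b, hab, rfl⟩ := card_eq_two.1 hP2
  exact hblue a (hPS (by simp)) b (hPS (by simp)) hab

theorem exists_coloring_of_probability {p : ℝ} (hp : p ∈ Set.Icc 0 (1 / 2))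
    (hpN : 48 * (p ^ 2 * N) ≤ 1) (hn : 4 * (N : ℝ) ^ (n + 1) ≤ Real.exp (p * n.choose 2 / 2)) :
    ∃ χ : Finset (Fin N) → Bool, ¬ HasRedK4e N χ ∧ ¬ HasBlueStar N n χ := by
  have hpN' : p * (48 * (p ^ 2 * N)) ≤ p * 1 := mul_le_mul_of_nonneg_left hpN hp.1
  have hcard : (Fintype.card (StarCopy (Fin N) n) : ℝ) ≤ (N : ℝ) ^ (n + 1) := by
    exact_mod_cast (card_starCopy_le (V := Fin N) n).trans_eq (by rw [Fintype.card_fin])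
  have hdeg : ∀ e, #{q : StarCopy (Fin N) 3 | e ∈ q.triples} ≤ 3 * N := by
    simpa using card_starCopy_mem_triples_le (V := Fin N) 1
  have hp8 : 8 * p ^ 3 ≤ 1 := by linarith [pow_le_pow_left₀ hp.1 hp.2 3]
  obtain ⟨χ, hred, hblue⟩ := exists_coloring_of_uniform (k := 3) ⟨hp.1, by linarith [hp.2]⟩
    (fun q : StarCopy (Fin N) 3 ↦ q.card_triples) (fun q : StarCopy (Fin N) n ↦ q.card_triples)
    hdeg hp8 (by push_cast; linarith [hp.2]) (by push_cast; linarith) (by linarith)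
  refine ⟨χ, fun h ↦ ?_, fun h ↦ ?_⟩
  · obtain ⟨q, hq⟩ := h.exists_red_star
    obtain ⟨e, he, hχe⟩ := hred q
    simp [hq e he] at hχe
  · obtain ⟨q, hq⟩ := h.exists_blue_star
    obtain ⟨e, he, hχe⟩ := hblue q
    simp [hq e he] at hχe

lemma four_mul_pow_succ_le (hn : 3 ≤ n) (hN : N ≤ n ^ 2) :
    4 * N ^ (n + 1) ≤ n ^ (5 * (n - 1)) :=
  calc 4 * N ^ (n + 1)
    _ ≤ n ^ 2 * (n ^ 2) ^ (n + 1) := by gcongr; nlinarith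
    _ = n ^ (2 * (n + 2)) := by ring
    _ ≤ n ^ (5 * (n - 1)) := Nat.pow_le_pow_right (by omega) (by omega)

lemma exp_log_div_mul_choose_two (hn : n ≠ 0) :
    Real.exp (20 * Real.log n / n * n.choose 2 / 2) = (n : ℝ) ^ (5 * (n - 1)) := by
  have hn0 : (0 : ℝ) < n := by positivity
  rw [← Real.exp_log (pow_pos hn0 _), Real.log_pow, Nat.cast_choose_two]
  push_cast [Nat.one_le_iff_ne_zero.2 hn]
  congr 1
  field_simp
  ring

theorem exists_coloring_of_log_sq_mul_le (hn : 3 ≤ n) (hlog : 40 * Real.log n ≤ n)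
    (hN : 19200 * (Real.log n ^ 2 * N) ≤ n ^ 2) :
    ∃ χ : Finset (Fin N) → Bool, ¬ HasRedK4e N χ ∧ ¬ HasBlueStar N n χ := by
  have hn3 : (3 : ℝ) ≤ n := by exact_mod_cast hn
  have hn0 : (0 : ℝ) < n := by linarith
  have hlog1 : 1 ≤ Real.log n :=
    (Real.le_log_iff_exp_le hn0).2 (Real.exp_one_lt_three.le.trans hn3)
  have hNn : N ≤ n ^ 2 := by
    have : (1 : ℝ) * N ≤ Real.log n ^ 2 * N := by gcongr; exact one_le_pow₀ hlog1
    have : (N : ℝ) ≤ (n : ℝ) ^ 2 := by linarith [(Nat.cast_nonneg N : (0 : ℝ) ≤ N)]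
    exact_mod_cast this
  refine exists_coloring_of_probability (p := 20 * Real.log n / n) ⟨by positivity, ?_⟩ ?_ ?_
  · rw [div_le_iff₀ hn0]
    linarith
  · rw [div_pow, div_mul_eq_mul_div, ← mul_div_assoc, div_le_one (by positivity)]
    linarith
  · rw [exp_log_div_mul_choose_two (by omega)]
    exact_mod_cast four_mul_pow_succ_le hn hNn

end Coloring

lemma eventually_mul_log_le (C : ℝ) : ∀ᶠ n : ℕ in Filter.atTop, C * Real.log n ≤ n := by
  have h := (Real.isLittleO_log_id_atTop.const_mul_left C).bound one_pos
  filter_upwards [tendsto_natCast_atTop_atTop.eventually h] with n hn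
  simpa using (le_abs_self _).trans hn

lemma log_le_logb_two {x : ℝ} (hx : 1 ≤ x) : Real.log x ≤ Real.logb 2 x :=
  le_div_self (Real.log_nonneg hx) (Real.log_pos one_lt_two)
    (by linarith [Real.log_two_lt_d9])

lemma log_sq_mul_le_of_eq_floor {c : ℝ} (hc : 0 ≤ c) {n N : ℕ} (hn : 1 ≤ n)
    (hN : N = ⌊c * (n : ℝ) ^ 2 / Real.logb 2 n ^ 2⌋₊) :
    Real.log n ^ 2 * N ≤ c * (n : ℝ) ^ 2 := by
  have hn1 : (1 : ℝ) ≤ n := by exact_mod_cast hn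
  have hle : Real.log n ^ 2 ≤ Real.logb 2 n ^ 2 :=
    pow_le_pow_left₀ (Real.log_nonneg hn1) (log_le_logb_two hn1) 2
  calc Real.log n ^ 2 * N
    _ ≤ Real.logb 2 n ^ 2 * (c * (n : ℝ) ^ 2 / Real.logb 2 n ^ 2) := by
        rw [hN]
        exact mul_le_mul hle (Nat.floor_le (by positivity)) (Nat.cast_nonneg _) (sq_nonneg _)
    _ ≤ c * (n : ℝ) ^ 2 := by
        rw [mul_div_left_comm]
        exact mul_le_of_le_one_right (by positivity) (div_self_le_one _)

/-- There is `c > 0` such that for all sufficiently large `n`,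
`r(K₄⁽³⁾ − e, Sₙ) ≥ c n² / (log₂ n)²`: with `N = ⌊c n² / (log₂ n)²⌋` there is a
2-coloring of `K_N^(3)` with no red `K₄⁽³⁾ − e` and no blue `Sₙ`. -/
theorem lower_bound_K4e_star :
    ∃ c : ℝ, 0 < c ∧ ∃ n₀ : ℕ, ∀ n : ℕ, n₀ ≤ n →
      ∀ N : ℕ, N = ⌊c * (n : ℝ) ^ 2 / (Real.logb 2 n) ^ 2⌋₊ →
        ∃ χ : Finset (Fin N) → Bool, ¬ HasRedK4e N χ ∧ ¬ HasBlueStar N n χ := by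
  obtain ⟨n₀, hn₀⟩ := Filter.eventually_atTop.1 (eventually_mul_log_le 40)
  refine ⟨1 / 19200, by norm_num, max n₀ 3, fun n hn N hN ↦ ?_⟩
  have hn3 : 3 ≤ n := (le_max_right _ _).trans hn
  have hlogN : Real.log n ^ 2 * N ≤ 1 / 19200 * (n : ℝ) ^ 2 :=
    log_sq_mul_le_of_eq_floor (by norm_num) (by omega) hN
  exact exists_coloring_of_log_sq_mul_le hn3 (hn₀ n ((le_max_left _ _).trans hn)) (by linarith)
end

section
/- There exists a constant c' > 0 such that for all integers n ≥ 2, r(K_4^(3) − e, S_n) ≤ c'·n²/log n; that is, if N ≥ c'·n²/log n, then every 2-coloring of K_N^(3) contains a red copy of K_4^(3) − e or a blue copy of S_n. -/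
/-!
Fix a vertex `v` and call a pair `{a, b}` an edge of the *link graph* when `{v, a, b}` is red. If
there is no red `K₄⁽³⁾ − e`, the link is triangle-free; if there is no blue `Sₙ` centred at `v`, it
has no independent set of size `n` avoiding `v`. In a triangle-free graph neighbourhoods are
independent, so both the maximum degree and the independence number of the link are at most `n`.

The Ajtai–Komlós–Szemerédi theorem says that a triangle-free graph on `N` vertices with maximum
degree at most `d` has an independent set of size `Ω(N log d / d)`, which forces
`N = O(n² / log n)`. It is proved by Shearer's averaging argument: for a uniformly random
independent set `W`, give each vertex `v` the weight `d · [v ∈ W] + |W ∩ N(v)|`. The total weight is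
at most `2d|W|`. Conditionally on the part `Z` of `W` outside the closed neighbourhood of `v`,
either `W = Z ∪ {v}`, or `W = Z ∪ T` where `T` is an arbitrary subset of the `x` neighbours of `v`
that have no neighbour in `Z`. These `2ˣ + 1` outcomes are equally likely, so `v` has expected
weight `(d + x 2ˣ⁻¹) / (2ˣ + 1)`, which is `Ω(log d)` whatever `x` is.
-/

open Finset

theorem logb_two_le_four_mul_sqrt {d : ℝ} (hd : 0 < d) : Real.logb 2 d ≤ 4 * √d := by
  have hsqrt : Real.log d = 2 * Real.log √d := by rw [Real.log_sqrt hd.le]; ring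
  have hlog : Real.log √d ≤ √d := Real.log_le_self (Real.sqrt_nonneg d)
  have htwo := Real.log_two_gt_d9
  rw [Real.logb, hsqrt, div_le_iff₀ (by linarith)]
  nlinarith [Real.sqrt_nonneg d]

theorem logb_two_div_eight_mul_le {d : ℝ} (hd : 0 < d) (x : ℕ) :
    Real.logb 2 d / 8 * (2 ^ x + 1) ≤ d + x * 2 ^ x / 2 := by
  have hx : (1 : ℝ) ≤ 2 ^ x := one_le_pow₀ one_le_two
  have hsq : √d * √d = d := Real.mul_self_sqrt hd.le
  -- If `2ˣ ≤ √d` the term `d` suffices on its own; otherwise `x ≥ log₂ √d` and `x 2ˣ / 2` does.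
  rcases le_total (2 ^ x) √d with h | h
  · have hlog : Real.logb 2 d / 8 ≤ √d / 2 := by linarith [logb_two_le_four_mul_sqrt hd]
    calc Real.logb 2 d / 8 * (2 ^ x + 1)
        ≤ √d / 2 * (√d + √d) := by gcongr; exact hx.trans h
      _ = d := by linear_combination hsq
      _ ≤ d + x * 2 ^ x / 2 := le_add_of_nonneg_right (by positivity)
  · have hlog : Real.logb 2 d ≤ 2 * x := by
      rw [Real.logb_le_iff_le_rpow one_lt_two hd, mul_comm, Real.rpow_mul zero_le_two,
        Real.rpow_natCast, Real.rpow_two, sq, ← hsq]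
      gcongr
    calc Real.logb 2 d / 8 * (2 ^ x + 1)
        ≤ 2 * x / 8 * (2 ^ x + 2 ^ x) := by gcongr
      _ = x * 2 ^ x / 2 := by ring
      _ ≤ d + x * 2 ^ x / 2 := le_add_of_nonneg_left hd.le

theorem two_mul_sum_card_powerset {α : Type*} (X : Finset α) :
    2 * ∑ T ∈ X.powerset, #T = #X * 2 ^ #X := by
  rw [sum_powerset_apply_card (fun k ↦ k)]
  simp only [smul_eq_mul, mul_comm (Nat.choose _ _), Nat.sum_range_mul_choose]
  cases #X with
  | zero => simp
  | succ k => rw [Nat.add_sub_cancel, pow_succ]; ring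

section TriangleFree

variable {V : Type*} [Fintype V] [DecidableEq V] (G : SimpleGraph V) [DecidableRel G.Adj]

/-- The independent sets of `G` of all sizes, the sample space of the averaging argument. -/
def indepSets : Finset (Finset V) := {W | G.IsIndepSet W}

/-- The part of `W` outside the closed neighbourhood of `v`, on which the argument conditions. -/
def farPart (v : V) (W : Finset V) : Finset V := W \ insert v (G.neighborFinset v)

/-- The neighbours of `v` that have no neighbour in `Z`, that is, those which can be added to an
independent set `Z`. -/
def freeNeighbors (v : V) (Z : Finset V) : Finset V :=
  {a ∈ G.neighborFinset v | ∀ z ∈ Z, ¬ G.Adj a z}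

/-- Shearer's weight `d · [v ∈ W] + |W ∩ N(v)|` of the vertex `v` with respect to `W`. -/
def vertexWeight (d : ℝ) (v : V) (W : Finset V) : ℝ :=
  (if v ∈ W then d else 0) + #(W ∩ G.neighborFinset v)

variable {G} {v : V} {W Z : Finset V}

theorem mem_indepSets : W ∈ indepSets G ↔ G.IsIndepSet W := by simp [indepSets]

theorem mem_farPart {a : V} : a ∈ farPart G v W ↔ a ∈ W ∧ a ≠ v ∧ ¬ G.Adj v a := by
  simp [farPart]

theorem mem_freeNeighbors {a : V} :
    a ∈ freeNeighbors G v Z ↔ G.Adj v a ∧ ∀ z ∈ Z, ¬ G.Adj a z := by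
  simp [freeNeighbors]

theorem farPart_mem_indepSets (hW : W ∈ indepSets G) : farPart G v W ∈ indepSets G :=
  mem_indepSets.2 ((mem_indepSets.1 hW).mono (coe_subset.2 sdiff_subset))

theorem farPart_farPart : farPart G v (farPart G v W) = farPart G v W := by
  simp [farPart]

theorem farPart_union_inter_neighborFinset (hv : v ∉ W) :
    farPart G v W ∪ W ∩ G.neighborFinset v = W := by
  rw [farPart, ← inter_insert_of_notMem hv, sdiff_union_inter]

theorem inter_neighborFinset_subset_freeNeighbors (hW : W ∈ indepSets G) :
    W ∩ G.neighborFinset v ⊆ freeNeighbors G v (farPart G v W) := by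
  intro a ha
  rw [mem_inter, SimpleGraph.mem_neighborFinset] at ha
  exact mem_freeNeighbors.2 ⟨ha.2, fun z hz haz ↦
    mem_indepSets.1 hW ha.1 (mem_farPart.1 hz).1 haz.ne haz⟩

theorem isIndepSet_insert_of_farPart_eq (hZ : G.IsIndepSet Z) (hfar : farPart G v Z = Z) :
    G.IsIndepSet (insert v Z : Finset V) := by
  have hZv : ∀ a ∈ Z, ¬ G.Adj v a := fun a ha ↦ (mem_farPart.1 (hfar.symm ▸ ha)).2.2
  rw [coe_insert, SimpleGraph.isIndepSet_iff, Set.pairwise_insert]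
  exact ⟨hZ, fun a ha _ ↦ ⟨hZv a ha, fun hav ↦ hZv a ha hav.symm⟩⟩

theorem notMem_union_of_subset_freeNeighbors (hfar : farPart G v Z = Z) {T : Finset V}
    (hT : T ⊆ freeNeighbors G v Z) : v ∉ Z ∪ T := by
  have hvZ : v ∉ Z := fun hv ↦ (mem_farPart.1 (hfar.symm ▸ hv)).2.1 rfl
  have hvT : v ∉ T := fun hv ↦ G.irrefl (mem_freeNeighbors.1 (hT hv)).1
  simp [hvZ, hvT]

theorem inter_neighborFinset_of_farPart_eq (hfar : farPart G v Z = Z) :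
    Z ∩ G.neighborFinset v = ∅ := by
  rw [← disjoint_iff_inter_eq_empty]
  exact (Finset.sdiff_eq_self_iff_disjoint.1 hfar).mono_right (subset_insert _ _)

theorem union_inter_neighborFinset (hfar : farPart G v Z = Z) {T : Finset V}
    (hT : T ⊆ freeNeighbors G v Z) : (Z ∪ T) ∩ G.neighborFinset v = T := by
  rw [union_inter_distrib_right, inter_neighborFinset_of_farPart_eq hfar, empty_union]
  exact inter_eq_left.2 (hT.trans (filter_subset _ _))

theorem farPart_union (hfar : farPart G v Z = Z) {T : Finset V}
    (hT : T ⊆ freeNeighbors G v Z) : farPart G v (Z ∪ T) = Z := by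
  have hTN : T ⊆ insert v (G.neighborFinset v) :=
    (hT.trans (filter_subset _ _)).trans (subset_insert _ _)
  rw [farPart, union_sdiff_distrib, sdiff_eq_empty_iff_subset.2 hTN, union_empty]
  exact hfar

theorem isIndepSet_union_of_subset_freeNeighbors (hG : G.CliqueFree 3) (hZ : G.IsIndepSet Z)
    {T : Finset V} (hT : T ⊆ freeNeighbors G v Z) : G.IsIndepSet (Z ∪ T : Finset V) := by
  have hTind : G.IsIndepSet T := (SimpleGraph.isIndepSet_neighborSet_of_triangleFree G hG v).mono
    fun a ha ↦ (mem_freeNeighbors.1 (hT ha)).1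
  have hTZ : ∀ a ∈ T, ∀ z ∈ Z, ¬ G.Adj a z := fun a ha ↦ (mem_freeNeighbors.1 (hT ha)).2
  rw [coe_union, SimpleGraph.isIndepSet_iff, Set.pairwise_union]
  exact ⟨hZ, hTind,
    fun z hz a ha _ ↦ ⟨fun hza ↦ hTZ a ha z hz hza.symm, hTZ a ha z hz⟩⟩

theorem filter_farPart_eq_and_mem (hZ : Z ∈ indepSets G) (hfar : farPart G v Z = Z) :
    {W ∈ indepSets G | farPart G v W = Z ∧ v ∈ W} = {insert v Z} := by
  ext W
  simp only [mem_filter, mem_singleton]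
  constructor
  · rintro ⟨hW, rfl, hv⟩
    have hWv : ∀ a ∈ W, ¬ G.Adj v a := fun a ha hva ↦ mem_indepSets.1 hW hv ha hva.ne hva
    ext a
    rw [mem_insert, mem_farPart]
    grind
  · rintro rfl
    have hind : G.IsIndepSet (insert v Z : Finset V) :=
      isIndepSet_insert_of_farPart_eq (mem_indepSets.1 hZ) hfar
    refine ⟨mem_indepSets.2 hind, ?_, mem_insert_self v Z⟩
    rw [farPart, insert_sdiff_of_mem _ (mem_insert_self _ _)]
    exact hfar

theorem sum_fiber_farPart {M : Type*} [AddCommMonoid M] (hG : G.CliqueFree 3)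
    (hZ : Z ∈ indepSets G) (hfar : farPart G v Z = Z) (f : Finset V → M) :
    ∑ W ∈ indepSets G with farPart G v W = Z, f W =
      f (insert v Z) + ∑ T ∈ (freeNeighbors G v Z).powerset, f (Z ∪ T) := by
  rw [← sum_filter_add_sum_filter_not _ (v ∈ ·), filter_filter, filter_filter,
    filter_farPart_eq_and_mem hZ hfar, sum_singleton]
  congr 1
  refine sum_nbij' (· ∩ G.neighborFinset v) (Z ∪ ·) ?_ ?_ ?_ ?_ ?_
  · intro W hW
    obtain ⟨hind, rfl, -⟩ := mem_filter.1 hW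
    exact mem_powerset.2 (inter_neighborFinset_subset_freeNeighbors hind)
  · intro T hT
    rw [mem_powerset] at hT
    have hind : G.IsIndepSet (Z ∪ T : Finset V) :=
      isIndepSet_union_of_subset_freeNeighbors hG (mem_indepSets.1 hZ) hT
    exact mem_filter.2 ⟨mem_indepSets.2 hind,
      farPart_union hfar hT, notMem_union_of_subset_freeNeighbors hfar hT⟩
  · intro W hW
    obtain ⟨-, rfl, hv⟩ := mem_filter.1 hW
    exact farPart_union_inter_neighborFinset hv
  · exact fun T hT ↦ union_inter_neighborFinset hfar (mem_powerset.1 hT)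
  · intro W hW
    obtain ⟨-, rfl, hv⟩ := mem_filter.1 hW
    rw [farPart_union_inter_neighborFinset hv]

theorem card_fiber_farPart (hG : G.CliqueFree 3)
    (hZ : Z ∈ indepSets G) (hfar : farPart G v Z = Z) :
    #{W ∈ indepSets G | farPart G v W = Z} = 2 ^ #(freeNeighbors G v Z) + 1 := by
  rw [card_eq_sum_ones, sum_fiber_farPart hG hZ hfar]
  simp [add_comm]

theorem sum_vertexWeight_fiber_farPart (hG : G.CliqueFree 3)
    (hZ : Z ∈ indepSets G) (hfar : farPart G v Z = Z) (d : ℝ) :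
    ∑ W ∈ indepSets G with farPart G v W = Z, vertexWeight G d v W =
      d + #(freeNeighbors G v Z) * 2 ^ #(freeNeighbors G v Z) / 2 := by
  have hinsert : vertexWeight G d v (insert v Z) = d := by
    rw [vertexWeight, if_pos (mem_insert_self v Z), insert_inter_of_notMem (by simp),
      inter_neighborFinset_of_farPart_eq hfar]
    simp
  have hunion : ∀ T ∈ (freeNeighbors G v Z).powerset, vertexWeight G d v (Z ∪ T) = #T := by
    intro T hT
    rw [mem_powerset] at hT
    rw [vertexWeight, if_neg (notMem_union_of_subset_freeNeighbors hfar hT),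
      union_inter_neighborFinset hfar hT, zero_add]
  have hcard : 2 * ∑ T ∈ (freeNeighbors G v Z).powerset, (#T : ℝ) =
      #(freeNeighbors G v Z) * 2 ^ #(freeNeighbors G v Z) :=
    mod_cast two_mul_sum_card_powerset (freeNeighbors G v Z)
  rw [sum_fiber_farPart hG hZ hfar, hinsert, sum_congr rfl hunion]
  linarith

theorem logb_mul_card_indepSets_le (hG : G.CliqueFree 3) {d : ℝ} (hd : 0 < d) (v : V) :
    Real.logb 2 d / 8 * #(indepSets G) ≤ ∑ W ∈ indepSets G, vertexWeight G d v W := by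
  have hmaps : ∀ W ∈ indepSets G, farPart G v W ∈ {Z ∈ indepSets G | farPart G v Z = Z} :=
    fun W hW ↦ mem_filter.2 ⟨farPart_mem_indepSets hW, farPart_farPart⟩
  rw [card_eq_sum_card_fiberwise hmaps, ← sum_fiberwise_of_maps_to hmaps, Nat.cast_sum, mul_sum]
  refine sum_le_sum fun Z hZ ↦ ?_
  obtain ⟨hZ, hfar⟩ := mem_filter.1 hZ
  rw [card_fiber_farPart hG hZ hfar, sum_vertexWeight_fiber_farPart hG hZ hfar]
  exact_mod_cast logb_two_div_eight_mul_le hd _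

variable (G) in
theorem sum_card_inter_neighborFinset (W : Finset V) :
    ∑ v, #(W ∩ G.neighborFinset v) = ∑ w ∈ W, G.degree w := by
  have habove (v : V) : W ∩ G.neighborFinset v = W.bipartiteAbove G.Adj v := by
    ext; simp [bipartiteAbove]
  have hbelow (w : V) : univ.bipartiteBelow G.Adj w = G.neighborFinset w := by
    ext; simp [bipartiteBelow, G.adj_comm]
  simp only [habove, sum_card_bipartiteAbove_eq_sum_card_bipartiteBelow, hbelow,
    SimpleGraph.card_neighborFinset_eq_degree]

theorem sum_vertexWeight_le {d : ℝ} (hdeg : ∀ v, G.degree v ≤ d) (W : Finset V) :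
    ∑ v, vertexWeight G d v W ≤ 2 * d * #W := by
  have hmem : ∑ v, (if v ∈ W then d else 0) = d * #W := by simp [mul_comm]
  have hinter : (∑ v, #(W ∩ G.neighborFinset v) : ℝ) ≤ d * #W := by
    calc (∑ v, #(W ∩ G.neighborFinset v) : ℝ)
        = ∑ w ∈ W, (G.degree w : ℝ) := mod_cast sum_card_inter_neighborFinset G W
      _ ≤ ∑ _w ∈ W, d := sum_le_sum fun w _ ↦ hdeg w
      _ = d * #W := by simp [mul_comm]
  simp only [vertexWeight, sum_add_distrib]
  linarith

omit [DecidableEq V] in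
/-- The Ajtai–Komlós–Szemerédi theorem. -/
theorem card_mul_logb_le_of_cliqueFree_three (hG : G.CliqueFree 3) {d : ℝ} (hd : 0 < d)
    (hdeg : ∀ v, G.degree v ≤ d) :
    Fintype.card V * Real.logb 2 d ≤ 16 * d * G.indepNum := by
  classical
  have hpos : (0 : ℝ) < #(indepSets G) :=
    mod_cast card_pos.2 ⟨∅, mem_indepSets.2 (by simp)⟩
  have hlower : Fintype.card V * (Real.logb 2 d / 8 * #(indepSets G)) ≤
      ∑ W ∈ indepSets G, ∑ v, vertexWeight G d v W := by
    rw [sum_comm, ← nsmul_eq_mul]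
    exact card_nsmul_le_sum _ _ _ fun v _ ↦ logb_mul_card_indepSets_le hG hd v
  have hupper : ∑ W ∈ indepSets G, ∑ v, vertexWeight G d v W ≤
      #(indepSets G) * (2 * d * G.indepNum) := by
    rw [← nsmul_eq_mul]
    refine sum_le_card_nsmul _ _ _ fun W hW ↦ (sum_vertexWeight_le hdeg W).trans ?_
    gcongr
    exact (mem_indepSets.1 hW).card_le_indepNum
  have hcancel : Fintype.card V * (Real.logb 2 d / 8) ≤ 2 * d * G.indepNum :=
    le_of_mul_le_mul_left (by linarith) hpos
  linarith

end TriangleFree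

section Link

variable {N n : ℕ} {χ : Finset (Fin N) → Bool} {v : Fin N}

/-- The link graph of `v` in the red hypergraph. Requiring three distinct elements in `{v, a, b}`
makes `v` an isolated vertex. -/
def redLink (χ : Finset (Fin N) → Bool) (v : Fin N) : SimpleGraph (Fin N) where
  Adj a b := #{v, a, b} = 3 ∧ χ {v, a, b} = true
  symm := ⟨fun a b h ↦ by rwa [pair_comm b a]⟩
  loopless := ⟨fun a h ↦ (card_triple_eq_three_iff.1 h.1).2.2 rfl⟩

instance : DecidableRel (redLink χ v).Adj := fun a b ↦
  inferInstanceAs (Decidable (#{v, a, b} = 3 ∧ χ {v, a, b} = true))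

theorem hasRedK4e_of_redLink_triangle {a b c : Fin N} (hab : (redLink χ v).Adj a b)
    (hac : (redLink χ v).Adj a c) (hbc : (redLink χ v).Adj b c) : HasRedK4e N χ := by
  obtain ⟨hva, hvb, hab_ne⟩ := card_triple_eq_three_iff.1 hab.1
  obtain ⟨-, hvc, hac_ne⟩ := card_triple_eq_three_iff.1 hac.1
  obtain ⟨-, -, hbc_ne⟩ := card_triple_eq_three_iff.1 hbc.1
  have ha : a ∉ ({v, b, c} : Finset (Fin N)) := by grind
  have hb : b ∉ ({v, a, c} : Finset (Fin N)) := by grind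
  have hdistinct : #({{v, a, b}, {v, a, c}, {v, b, c}} : Finset (Finset (Fin N))) = 3 :=
    card_triple_eq_three_iff.2 ⟨ne_of_mem_of_not_mem' (by simp) hb,
      ne_of_mem_of_not_mem' (by simp) ha, ne_of_mem_of_not_mem' (by simp) ha⟩
  refine ⟨{v, a, b, c}, by grind, hdistinct.ge.trans (card_le_card fun T hT ↦ ?_)⟩
  simp only [mem_insert, mem_singleton] at hT
  rw [mem_filter, mem_powersetCard]
  rcases hT with rfl | rfl | rfl
  · exact ⟨⟨by grind, hab.1⟩, hab.2⟩
  · exact ⟨⟨by grind, hac.1⟩, hac.2⟩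
  · exact ⟨⟨by grind, hbc.1⟩, hbc.2⟩

theorem cliqueFree_three_redLink (hred : ¬ HasRedK4e N χ) (v : Fin N) :
    (redLink χ v).CliqueFree 3 := fun _ hS ↦ by
  obtain ⟨a, b, c, hab, hac, hbc, -⟩ := SimpleGraph.is3Clique_iff.1 hS
  exact hred (hasRedK4e_of_redLink_triangle hab hac hbc)

theorem card_lt_of_isIndepSet_redLink (hblue : ¬ HasBlueStar N n χ) {W : Finset (Fin N)}
    (hvW : v ∉ W) (hW : (redLink χ v).IsIndepSet W) : #W < n := by
  by_contra! hn
  obtain ⟨S, hSW, hS⟩ := exists_subset_card_eq hn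
  refine hblue ⟨v, S, fun hv ↦ hvW (hSW hv), hS, fun a ha b hb hab ↦ ?_⟩
  have hva : v ≠ a := by rintro rfl; exact hvW (hSW ha)
  have hvb : v ≠ b := by rintro rfl; exact hvW (hSW hb)
  by_contra hχ
  exact hW (hSW ha) (hSW hb) hab
    ⟨card_triple_eq_three_iff.2 ⟨hva, hvb, hab⟩, Bool.eq_true_of_not_eq_false hχ⟩

theorem degree_redLink_lt (hred : ¬ HasRedK4e N χ) (hblue : ¬ HasBlueStar N n χ) (u : Fin N) :
    (redLink χ v).degree u < n := by
  refine card_lt_of_isIndepSet_redLink hblue (v := v) ?_ ?_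
  · rw [SimpleGraph.mem_neighborFinset]
    exact fun huv ↦ (card_triple_eq_three_iff.1 huv.1).2.1 rfl
  · simpa using SimpleGraph.isIndepSet_neighborSet_of_triangleFree _
      (cliqueFree_three_redLink hred v) u

theorem indepNum_redLink_le (hblue : ¬ HasBlueStar N n χ) : (redLink χ v).indepNum ≤ n := by
  obtain ⟨W, hW⟩ := (redLink χ v).exists_isNIndepSet_indepNum
  have herase : #(W.erase v) < n :=
    card_lt_of_isIndepSet_redLink hblue (notMem_erase v W)
      (hW.isIndepSet.mono (coe_subset.2 (erase_subset v W)))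
  have hpred : #W - 1 ≤ #(W.erase v) := pred_card_le_card_erase
  rw [← hW.card_eq]
  omega

end Link

/-- There is `c' > 0` such that for all `n ≥ 2`, `r(K₄⁽³⁾ − e, Sₙ) ≤ c' n² / log₂ n`:
if `N ≥ c' n² / log₂ n` then every 2-coloring of `K_N^(3)` contains a red
`K₄⁽³⁾ − e` or a blue `Sₙ`. -/
theorem upper_bound_K4e_star :
    ∃ c' : ℝ, 0 < c' ∧ ∀ n : ℕ, 2 ≤ n →
      ∀ N : ℕ, c' * (n : ℝ) ^ 2 / Real.logb 2 n ≤ N →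
        ∀ χ : Finset (Fin N) → Bool, HasRedK4e N χ ∨ HasBlueStar N n χ := by
  refine ⟨17, by norm_num, fun n hn N hN χ ↦ ?_⟩
  by_contra! ⟨hred, hblue⟩
  have hn₀ : (0 : ℝ) < n := by positivity
  have hlog : 0 < Real.logb 2 n := Real.logb_pos one_lt_two (mod_cast hn)
  have hNpos : 0 < N := Nat.cast_pos.1 (lt_of_lt_of_le (by positivity) hN)
  let v : Fin N := ⟨0, hNpos⟩
  have hindep : (redLink χ v).indepNum ≤ n := indepNum_redLink_le hblue
  have hupper : N * Real.logb 2 n ≤ 16 * (n : ℝ) ^ 2 := calc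
    N * Real.logb 2 n ≤ 16 * n * (redLink χ v).indepNum := by
      simpa using card_mul_logb_le_of_cliqueFree_three (cliqueFree_three_redLink hred v) hn₀
        fun u ↦ mod_cast (degree_redLink_lt hred hblue u).le
    _ ≤ 16 * n * n := by gcongr
    _ = 16 * (n : ℝ) ^ 2 := by ring
  have hlower : 17 * (n : ℝ) ^ 2 ≤ N * Real.logb 2 n := (div_le_iff₀ hlog).1 hN
  linarith [pow_pos hn₀ 2]
end

section
/- There exists a constant c > 0 such that for all sufficiently large n, r(K_4^(3), S_n) ≥ 2^{c·(log n)²}; that is, there exists a 2-coloring of K_N^(3) with N = ⌊2^{c·(log n)²}⌋ that contains no red copy of K_4^(3) and no blue copy of S_n. -/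
/-- A red copy of `K_s^(3)`: an `s`-element vertex set all of whose 3-element subsets
are red (red = `true`). -/
def HasRedClique3 (N s : ℕ) (χ : Finset (Fin N) → Bool) : Prop :=
  ∃ S : Finset (Fin N), S.card = s ∧ ∀ T ⊆ S, T.card = 3 → χ T = true

/-!
Color the pairs of vertices by `ZMod 3` at random, and let a triple be red with apex `v` only if
both of its edges at `v` have one color and the third edge has the next color. In a red `K₄⁽³⁾` the
colors then force a 4-cycle `a b d c` in which `a` and `d` are apexes over the pair `bc`, while `b`
and `c` are apexes over `ad`.

To exclude this pattern, give every vertex a binary label and a Reed–Solomon codeword, so that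
the codewords of two vertices agree in few positions. Every pair `xy` also carries random guesses,
and a red triple with apex `v` over `xy` needs them to be right: the letter of the codeword of `v`
at a position separating the labels of `x` and `y`, and the label of `v` at all positions where the
codewords of `x` and `y` agree. The guess on `bc` makes the codewords of `a` and `d` agree at the
position separating `b` and `c`; the guess on `ad` then makes the labels of `b` and `c` equal there,
a contradiction.

Over the field with `2 ^ a` elements and for `N ≤ 2 ^ (a ^ 2)`, the guesses on a pair are right with
probability at least `1 / (3 * 4 ^ a)`, independently for different pairs. For a vertex `v` and
`16 ^ a` further vertices joined to `v` in one color, this leaves too small a probability that no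
pair is right, and a union bound finishes the proof for `n ≥ 32 ^ a`.
-/

open Finset

section UnionBound

variable {P Ω Θ : Type*} [Fintype Ω]

open scoped Classical in
lemma card_filter_forall_notMem_le [Fintype P] {δ : ℝ} (Q : Finset P) (G : P → Finset Ω)
    (hG : ∀ z ∈ Q, δ * Fintype.card Ω ≤ #(G z)) :
    (#{ω : P → Ω | ∀ z ∈ Q, ω z ∉ G z} : ℝ) ≤
      (Fintype.card Ω : ℝ) ^ Fintype.card P * (1 - δ) ^ #Q := by
  have hpi : ({ω : P → Ω | ∀ z ∈ Q, ω z ∉ G z} : Finset (P → Ω)) =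
      Fintype.piFinset fun z => if z ∈ Q then (G z)ᶜ else univ := by
    ext ω
    simp only [mem_filter, mem_univ, true_and, Fintype.mem_piFinset]
    refine forall_congr' fun z => ?_
    split_ifs with hz <;> simp [hz]
  have hfactor (z : P) : (#(if z ∈ Q then (G z)ᶜ else univ) : ℝ) ≤
      Fintype.card Ω * if z ∈ Q then 1 - δ else 1 := by
    split_ifs with hz
    · rw [card_compl, Nat.cast_sub (card_le_univ _)]
      linarith [hG z hz]
    · simp
  calc (#{ω : P → Ω | ∀ z ∈ Q, ω z ∉ G z} : ℝ)
      = ∏ z, (#(if z ∈ Q then (G z)ᶜ else univ) : ℝ) := by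
        rw [hpi, Fintype.card_piFinset, Nat.cast_prod]
    _ ≤ ∏ z, Fintype.card Ω * (if z ∈ Q then 1 - δ else 1) :=
        prod_le_prod (fun _ _ => Nat.cast_nonneg _) fun z _ => hfactor z
    _ = (Fintype.card Ω : ℝ) ^ Fintype.card P * (1 - δ) ^ #Q := by
        rw [prod_mul_distrib, prod_const, card_univ, prod_ite_mem, univ_inter, prod_const]

lemma exists_forall_exists_mem_of_sum_lt_one [Finite P] [Nonempty Ω] {δ : ℝ} (I : Finset Θ)
    (Q : Θ → Finset P) (G : Θ → P → Finset Ω)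
    (hG : ∀ θ ∈ I, ∀ z ∈ Q θ, δ * Fintype.card Ω ≤ #(G θ z))
    (hsum : ∑ θ ∈ I, (1 - δ) ^ #(Q θ) < 1) :
    ∃ ω : P → Ω, ∀ θ ∈ I, ∃ z ∈ Q θ, ω z ∈ G θ z := by
  classical
  have := Fintype.ofFinite P
  by_contra! hcon
  let avoiding (θ : Θ) : Finset (P → Ω) := {ω | ∀ z ∈ Q θ, ω z ∉ G θ z}
  have hcover : (univ : Finset (P → Ω)) ⊆ I.biUnion avoiding := fun ω _ => by
    obtain ⟨θ, hθ, hω⟩ := hcon ω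
    exact mem_biUnion.2 ⟨θ, hθ, mem_filter.2 ⟨mem_univ ω, hω⟩⟩
  have htotal : Fintype.card (P → Ω) ≤ ∑ θ ∈ I, #(avoiding θ) :=
    (card_le_card hcover).trans card_biUnion_le
  have hpos : 0 < (Fintype.card Ω : ℝ) ^ Fintype.card P := by
    have : 0 < Fintype.card Ω := Fintype.card_pos
    positivity
  have : (Fintype.card Ω : ℝ) ^ Fintype.card P < (Fintype.card Ω : ℝ) ^ Fintype.card P :=
    calc (Fintype.card Ω : ℝ) ^ Fintype.card P
        ≤ ∑ θ ∈ I, (#(avoiding θ) : ℝ) := by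
          rw [Fintype.card_fun] at htotal
          exact_mod_cast htotal
      _ ≤ ∑ θ ∈ I, (Fintype.card Ω : ℝ) ^ Fintype.card P * (1 - δ) ^ #(Q θ) :=
          sum_le_sum fun θ hθ => card_filter_forall_notMem_le (Q θ) (G θ) (hG θ hθ)
      _ = (Fintype.card Ω : ℝ) ^ Fintype.card P * ∑ θ ∈ I, (1 - δ) ^ #(Q θ) :=
          (mul_sum ..).symm
      _ < (Fintype.card Ω : ℝ) ^ Fintype.card P := mul_lt_of_lt_one_right hpos hsum
  exact this.false

end UnionBound

section Cherry

variable {V : Type*} {c : Sym2 V → ZMod 3} {v x y : V}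

/-- The triangle `v x y` is a cherry with apex `v` for the edge coloring `c`: both edges at `v`
have one color and the opposite edge has the cyclically next one. -/
def IsCherry (c : Sym2 V → ZMod 3) (v x y : V) : Prop :=
  c s(v, x) = c s(v, y) ∧ c s(x, y) = c s(v, x) + 1

lemma IsCherry.symm (h : IsCherry c v x y) : IsCherry c v y x :=
  ⟨h.1.symm, by rw [Sym2.eq_swap, h.2, h.1]⟩

lemma IsCherry.not_swap (h : IsCherry c v x y) : ¬ IsCherry c x v y := by
  rintro ⟨hleg, -⟩
  rw [Sym2.eq_swap, h.2] at hleg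
  exact absurd hleg.symm (by simp)

lemma IsCherry.fourCycle {a b d e : V} (habd : IsCherry c a b d)
    (habe : IsCherry c a b e ∨ IsCherry c b a e ∨ IsCherry c e a b)
    (hade : IsCherry c a d e ∨ IsCherry c d a e ∨ IsCherry c e a d)
    (hbde : IsCherry c b d e ∨ IsCherry c d b e ∨ IsCherry c e b d) :
    IsCherry c e b d ∧ IsCherry c b a e ∧ IsCherry c d a e := by
  simp only [IsCherry, Sym2.eq_swap (a := b) (b := a), Sym2.eq_swap (a := d) (b := a),
    Sym2.eq_swap (a := d) (b := b), Sym2.eq_swap (a := e) (b := a),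
    Sym2.eq_swap (a := e) (b := b), Sym2.eq_swap (a := e) (b := d)] at *
  have hcolors : c s(b, e) = c s(a, b) ∧ c s(d, e) = c s(a, b) ∧ c s(a, e) = c s(a, b) + 1 := by
    grind
  grind

end Cherry

/-- Deterministic data on the vertex set: each vertex has a word `label` over `β`, used to tell
vertices apart at the position `sep` chosen for each pair, and a codeword over `F`. -/
structure VertexCode (V ι F β : Type*) where
  label : V → ι → β
  codeword : V → ι → F
  sep : Sym2 V → ι
  label_sep_ne : ∀ {x y}, x ≠ y → label x (sep s(x, y)) ≠ label y (sep s(x, y))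

/-- The value, to be chosen at random, attached to a pair of vertices: a color, a guessed letter
of the apex's codeword and a guess for the apex's label. -/
abbrev PairGuess (ι F β : Type*) := ZMod 3 × F × (ι → β)

namespace VertexCode

variable {V ι F β : Type*} (𝒱 : VertexCode V ι F β)

open scoped Classical in
/-- The positions at which the codewords of the members of a pair agree. -/
noncomputable def agreement [Fintype ι] (e : Sym2 V) : Finset ι :=
  {i | ∀ x ∈ e, ∀ y ∈ e, 𝒱.codeword x i = 𝒱.codeword y i}

lemma mem_agreement_mk [Fintype ι] {x y : V} {i : ι} :
    i ∈ 𝒱.agreement s(x, y) ↔ 𝒱.codeword x i = 𝒱.codeword y i := by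
  simp only [agreement, mem_filter, mem_univ, true_and, Sym2.mem_iff, forall_eq_or_imp, forall_eq,
    and_true]
  exact ⟨fun h => h.1, fun h => ⟨h, h.symm⟩⟩

/-- The guess `w` on the pair `e` is right for the apex `v` whose edges to `e` have color `α`. -/
structure Compatible [Fintype ι] (v : V) (α : ZMod 3) (e : Sym2 V) (w : PairGuess ι F β) :
    Prop where
  color_eq : w.1 = α + 1
  letter_eq : w.2.1 = 𝒱.codeword v (𝒱.sep e)
  label_eq : ∀ i ∈ 𝒱.agreement e, w.2.2 i = 𝒱.label v i

open scoped Classical in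
lemma card_pairGuess_eq [Fintype ι] [Fintype F] [Fintype β] (v : V) (α : ZMod 3) (e : Sym2 V) :
    Fintype.card (PairGuess ι F β) = 3 * Fintype.card F * Fintype.card β ^ #(𝒱.agreement e) *
      #{w | 𝒱.Compatible v α e w} := by
  have hprod : ({w | 𝒱.Compatible v α e w} : Finset (PairGuess ι F β)) =
      {α + 1} ×ˢ {𝒱.codeword v (𝒱.sep e)} ×ˢ
        Fintype.piFinset fun i => if i ∈ 𝒱.agreement e then {𝒱.label v i} else univ := by
    ext ⟨γ, t, g⟩
    simp only [mem_filter, mem_univ, true_and, mem_product, mem_singleton, Fintype.mem_piFinset]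
    refine ⟨fun h => ⟨h.color_eq, h.letter_eq, fun i => ?_⟩,
      fun ⟨hγ, ht, hg⟩ => ⟨hγ, ht, fun i hi => by simpa [hi] using hg i⟩⟩
    split_ifs with hi
    · exact mem_singleton.2 (h.label_eq i hi)
    · exact mem_univ _
  have hcard : #{w | 𝒱.Compatible v α e w} = Fintype.card β ^ #(𝒱.agreement e)ᶜ := by
    simp only [hprod, card_product, card_singleton, one_mul, Fintype.card_piFinset, apply_ite card,
      card_univ, prod_ite, prod_const, one_pow, filter_notMem_eq_sdiff, compl_eq_univ_sdiff]
  rw [hcard, mul_assoc, ← pow_add, card_add_card_compl, Fintype.card_prod, Fintype.card_prod,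
    ZMod.card, Fintype.card_fun, mul_assoc]

/-- The triple `{v, x, y}` is red with apex `v` under the choice `ω` of guesses. -/
structure IsRedAt [Fintype ι] (ω : Sym2 V → PairGuess ι F β) (v x y : V) : Prop where
  legs_eq : (ω s(v, x)).1 = (ω s(v, y)).1
  compatible : 𝒱.Compatible v (ω s(v, x)).1 s(x, y) (ω s(x, y))

/-- The red triples of the coloring determined by the guesses `ω`. -/
def IsRed [Fintype ι] [DecidableEq V] (ω : Sym2 V → PairGuess ι F β) (T : Finset V) : Prop :=
  ∃ v x y, T = {v, x, y} ∧ 𝒱.IsRedAt ω v x y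

section Coloring

variable {𝒱} [Fintype ι] {ω : Sym2 V → PairGuess ι F β}

lemma IsRedAt.isCherry {v x y : V} (h : 𝒱.IsRedAt ω v x y) :
    IsCherry (fun e => (ω e).1) v x y :=
  ⟨h.legs_eq, h.compatible.color_eq⟩

lemma IsRedAt.symm {v x y : V} (h : 𝒱.IsRedAt ω v x y) : 𝒱.IsRedAt ω v y x :=
  ⟨h.legs_eq.symm, by rw [← h.legs_eq, Sym2.eq_swap (a := y)]; exact h.compatible⟩

lemma not_isRedAt_fourCycle {a b c d : V} (hbc : b ≠ c) (ha : 𝒱.IsRedAt ω a b c)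
    (hd : 𝒱.IsRedAt ω d b c) (hb : 𝒱.IsRedAt ω b a d) : ¬ 𝒱.IsRedAt ω c a d := fun hc =>
  have hagree : 𝒱.sep s(b, c) ∈ 𝒱.agreement s(a, d) :=
    𝒱.mem_agreement_mk.2 (ha.compatible.letter_eq.symm.trans hd.compatible.letter_eq)
  𝒱.label_sep_ne hbc
    ((hb.compatible.label_eq _ hagree).symm.trans (hc.compatible.label_eq _ hagree))

variable [DecidableEq V]

lemma IsRed.exists_apex {x y z : V} (hxy : x ≠ y) (hxz : x ≠ z) (hyz : y ≠ z)
    (h : 𝒱.IsRed ω {x, y, z}) :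
    𝒱.IsRedAt ω x y z ∨ 𝒱.IsRedAt ω y x z ∨ 𝒱.IsRedAt ω z x y := by
  obtain ⟨v, x', y', hT, hR⟩ := h
  have hR' := hR.symm
  have hmem (t : V) (ht : t ∈ ({x, y, z} : Finset V)) : t = v ∨ t = x' ∨ t = y' := by
    simpa only [hT, mem_insert, mem_singleton] using ht
  rcases hmem x (by simp) with rfl | rfl | rfl <;> rcases hmem y (by simp) with rfl | rfl | rfl <;>
    rcases hmem z (by simp) with rfl | rfl | rfl <;> first | contradiction | tauto

lemma not_isRedAt_of_isRed {a b c d : V} (hbc : b ≠ c) (hda : d ≠ a) (hdb : d ≠ b) (hdc : d ≠ c)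
    (hab : a ≠ b) (hac : a ≠ c) (habd : 𝒱.IsRed ω {a, b, d}) (hacd : 𝒱.IsRed ω {a, c, d})
    (hbcd : 𝒱.IsRed ω {b, c, d}) : ¬ 𝒱.IsRedAt ω a b c := by
  intro habc
  replace habd := habd.exists_apex hab hda.symm hdb.symm
  replace hacd := hacd.exists_apex hac hda.symm hdc.symm
  replace hbcd := hbcd.exists_apex hbc hdb.symm hdc.symm
  obtain ⟨hd, hb, hc⟩ := habc.isCherry.fourCycle
    (habd.imp IsRedAt.isCherry (.imp IsRedAt.isCherry IsRedAt.isCherry))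
    (hacd.imp IsRedAt.isCherry (.imp IsRedAt.isCherry IsRedAt.isCherry))
    (hbcd.imp IsRedAt.isCherry (.imp IsRedAt.isCherry IsRedAt.isCherry))
  have hb' : 𝒱.IsRedAt ω b a d := by
    rcases habd with h | h | h
    exacts [absurd h.isCherry hb.not_swap, h, absurd h.symm.isCherry hb.symm.not_swap]
  have hc' : 𝒱.IsRedAt ω c a d := by
    rcases hacd with h | h | h
    exacts [absurd h.isCherry hc.not_swap, h, absurd h.symm.isCherry hc.symm.not_swap]
  have hd' : 𝒱.IsRedAt ω d b c := by
    rcases hbcd with h | h | h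
    exacts [absurd h.symm.isCherry hd.not_swap, absurd h.symm.isCherry hd.symm.not_swap, h]
  exact not_isRedAt_fourCycle hbc habc hd' hb' hc'

lemma exists_not_isRed {S : Finset V} (hS : #S = 4) : ∃ T ⊆ S, #T = 3 ∧ ¬ 𝒱.IsRed ω T := by
  by_contra! hred
  obtain ⟨d, T, hdT, rfl, hT⟩ := card_eq_succ.1 hS
  obtain ⟨a, b, c, rfl, habc⟩ := hred T (subset_insert d T) hT
  obtain ⟨hab, hac, hbc⟩ : a ≠ b ∧ a ≠ c ∧ b ≠ c := by
    refine ⟨?_, ?_, ?_⟩ <;> rintro rfl <;> grind [card_le_two]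
  simp only [mem_insert, mem_singleton, not_or] at hdT
  obtain ⟨hda, hdb, hdc⟩ := hdT
  refine not_isRedAt_of_isRed hbc hda hdb hdc hab hac (hred _ ?_ ?_) (hred _ ?_ ?_)
    (hred _ ?_ ?_) habc <;> grind

end Coloring

section Guesses

variable {𝒱} [Fintype ι] {A s : ℕ}

open scoped Classical in
lemma inv_mul_card_pairGuess_le [Fintype F] [Fintype β] [Nonempty F] [Nonempty β] {e : Sym2 V}
    (hA : #(𝒱.agreement e) ≤ A) (v : V) (α : ZMod 3) :
    (3 * Fintype.card F * Fintype.card β ^ A : ℝ)⁻¹ * Fintype.card (PairGuess ι F β) ≤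
      #{w | 𝒱.Compatible v α e w} := by
  have hβ : 0 < Fintype.card β := Fintype.card_pos
  rw [inv_mul_le_iff₀ (by positivity), 𝒱.card_pairGuess_eq v α e]
  push_cast
  gcongr
  exact_mod_cast hβ

lemma exists_guesses_forall_compatible [Fintype V] [Fintype F] [Fintype β] [Nonempty F]
    [Nonempty β]
    (hA : ∀ x y, x ≠ y → #(𝒱.agreement s(x, y)) ≤ A)
    (hcount : (Fintype.card V * (3 * (Fintype.card V).choose s) : ℝ) *
      (1 - (3 * Fintype.card F * Fintype.card β ^ A : ℝ)⁻¹) ^ s.choose 2 < 1) :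
    ∃ ω : Sym2 V → PairGuess ι F β, ∀ v α (S : Finset V), #S = s →
      ∃ x ∈ S, ∃ y ∈ S, x ≠ y ∧ 𝒱.Compatible v α s(x, y) (ω s(x, y)) := by
  classical
  let stars : Finset (V × ZMod 3 × Finset V) := univ ×ˢ univ ×ˢ powersetCard s univ
  let pairs (θ : V × ZMod 3 × Finset V) : Finset (Sym2 V) := θ.2.2.offDiag.image Sym2.mk.uncurry
  have hpairs : ∀ θ ∈ stars, #(pairs θ) = s.choose 2 := fun θ hθ => by
    have hθs : #θ.2.2 = s := by simpa [stars] using hθ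
    rw [← hθs]
    exact Sym2.card_image_offDiag θ.2.2
  let good (θ : V × ZMod 3 × Finset V) (e : Sym2 V) : Finset (PairGuess ι F β) :=
    {w | 𝒱.Compatible θ.1 θ.2.1 e w}
  let δ : ℝ := (3 * Fintype.card F * Fintype.card β ^ A : ℝ)⁻¹
  have hgood : ∀ θ ∈ stars, ∀ e ∈ pairs θ, δ * Fintype.card (PairGuess ι F β) ≤ #(good θ e) := by
    intro θ _ e he
    obtain ⟨⟨x, y⟩, hxy, rfl⟩ := mem_image.1 he
    exact inv_mul_card_pairGuess_le (hA x y (mem_offDiag.1 hxy).2.2) θ.1 θ.2.1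
  have hsum : ∑ θ ∈ stars, (1 - δ) ^ #(pairs θ) < 1 := by
    rw [sum_congr rfl fun θ hθ => by rw [hpairs θ hθ], sum_const, nsmul_eq_mul]
    simpa only [stars, card_product, card_univ, card_powersetCard, ZMod.card, Nat.cast_mul,
      Nat.cast_ofNat] using hcount
  obtain ⟨ω, hω⟩ := exists_forall_exists_mem_of_sum_lt_one stars pairs good hgood hsum
  refine ⟨ω, fun v α S hS => ?_⟩
  obtain ⟨e, he, hcomp⟩ := hω (v, α, S) (by simp [stars, hS])
  obtain ⟨⟨x, y⟩, hxy, rfl⟩ := mem_image.1 he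
  obtain ⟨hx, hy, hne⟩ := mem_offDiag.1 hxy
  exact ⟨x, hx, y, hy, hne, (mem_filter.1 hcomp).2⟩

lemma exists_isRed_of_forall_compatible [DecidableEq V] {ω : Sym2 V → PairGuess ι F β}
    (hω : ∀ v α (S : Finset V), #S = s →
      ∃ x ∈ S, ∃ y ∈ S, x ≠ y ∧ 𝒱.Compatible v α s(x, y) (ω s(x, y)))
    (v : V) {S : Finset V} (hS : 3 * s ≤ #S) :
    ∃ x ∈ S, ∃ y ∈ S, x ≠ y ∧ 𝒱.IsRed ω {v, x, y} := by
  obtain ⟨α, -, hα⟩ := exists_le_card_fiber_of_mul_le_card_of_maps_to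
    (f := fun x => (ω s(v, x)).1) (fun x (_ : x ∈ S) => mem_univ _) univ_nonempty
    (by rwa [card_univ, ZMod.card])
  obtain ⟨S', hS', hcard⟩ := exists_subset_card_eq hα
  obtain ⟨x, hx, y, hy, hne, hcomp⟩ := hω v α S' hcard
  obtain ⟨hxS, rfl⟩ := mem_filter.1 (hS' hx)
  obtain ⟨hyS, hyx⟩ := mem_filter.1 (hS' hy)
  exact ⟨x, hxS, y, hyS, hne, v, x, y, rfl, hyx.symm, hcomp⟩

end Guesses

lemma exists_coloring [Fintype ι] [Fintype F] [Fintype β] [Nonempty F] [Nonempty β] {N A s n : ℕ}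
    (𝒱 : VertexCode (Fin N) ι F β) (hA : ∀ x y, x ≠ y → #(𝒱.agreement s(x, y)) ≤ A)
    (hs : 3 * s ≤ n)
    (hcount : (N * (3 * N.choose s) : ℝ) *
      (1 - (3 * Fintype.card F * Fintype.card β ^ A : ℝ)⁻¹) ^ s.choose 2 < 1) :
    ∃ χ : Finset (Fin N) → Bool, ¬ HasRedClique3 N 4 χ ∧ ¬ HasBlueStar N n χ := by
  classical
  obtain ⟨ω, hω⟩ := exists_guesses_forall_compatible hA (by simpa using hcount)
  refine ⟨fun T => decide (𝒱.IsRed ω T), ?_, ?_⟩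
  · rintro ⟨S, hS, hred⟩
    obtain ⟨T, hTS, hT, hblue⟩ := exists_not_isRed (𝒱 := 𝒱) (ω := ω) hS
    exact hblue (of_decide_eq_true (hred T hTS hT))
  · rintro ⟨v, S, -, hS, hblue⟩
    obtain ⟨x, hx, y, hy, hne, hred⟩ := exists_isRed_of_forall_compatible hω v (hS ▸ hs)
    exact of_decide_eq_false (hblue x hx y hy hne) hred

end VertexCode

lemma exists_code_card_agree_lt {V : Type*} [Fintype V] (F : Type*) [Field F] [Fintype F]
    [DecidableEq F] {A : ℕ} (hV : Fintype.card V ≤ Fintype.card F ^ A) :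
    ∃ ε : V → F → F, ∀ x y, x ≠ y → #{t | ε x t = ε y t} < A := by
  obtain ⟨f⟩ : Nonempty (V ↪ Polynomial.degreeLT F A) := by
    have := Fintype.ofEquiv _ (Polynomial.degreeLTEquiv F A).symm.toEquiv
    refine Function.Embedding.nonempty_of_card_le (hV.trans_eq ?_)
    rw [Fintype.card_congr (Polynomial.degreeLTEquiv F A).toEquiv, Fintype.card_fun,
      Fintype.card_fin]
  refine ⟨fun x t => (f x : Polynomial F).eval t, fun x y hxy => ?_⟩
  by_contra! hcard
  have hdeg (z : V) : (f z : Polynomial F).degree <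
      #{t | (f x : Polynomial F).eval t = (f y : Polynomial F).eval t} :=
    (Polynomial.mem_degreeLT.1 (f z).2).trans_le (by exact_mod_cast hcard)
  exact hxy <| f.injective <| Subtype.ext <|
    Polynomial.eq_of_degrees_lt_of_eval_finset_eq _ (hdeg x) (hdeg y) fun t ht => by simpa using ht

lemma exists_sep_of_injective {V ι β : Type*} [Nonempty ι] {f : V → ι → β}
    (hf : Function.Injective f) :
    ∃ sep : Sym2 V → ι, ∀ {x y}, x ≠ y → f x (sep s(x, y)) ≠ f y (sep s(x, y)) := by
  have hpair (e : Sym2 V) : ∃ i, ∀ x y, x ≠ y → s(x, y) = e → f x i ≠ f y i := by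
    induction e using Sym2.ind with
    | _ a b =>
      by_cases hab : a = b
      · subst hab
        exact ⟨Classical.arbitrary ι, fun x y hxy h => by grind⟩
      · obtain ⟨i, hi⟩ := Function.ne_iff.1 (hf.ne hab)
        exact ⟨i, fun x y _ h => by grind⟩
  choose sep hsep using hpair
  exact ⟨sep, fun hxy => hsep _ _ _ hxy rfl⟩

lemma exists_vertexCode {V : Type*} [Fintype V] (F : Type*) [Field F] [Fintype F] {A : ℕ}
    (hA : Fintype.card V ≤ Fintype.card F ^ A) (hV : Fintype.card V ≤ 2 ^ Fintype.card F) :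
    ∃ 𝒱 : VertexCode V F F Bool, ∀ x y, x ≠ y → #(𝒱.agreement s(x, y)) < A := by
  classical
  obtain ⟨ε, hε⟩ := exists_code_card_agree_lt F hA
  obtain ⟨label⟩ : Nonempty (V ↪ (F → Bool)) :=
    Function.Embedding.nonempty_of_card_le (by simpa using hV)
  obtain ⟨sep, hsep⟩ := exists_sep_of_injective label.injective
  let 𝒱 : VertexCode V F F Bool := ⟨label, ε, sep, hsep⟩
  refine ⟨𝒱, fun x y hxy => ?_⟩
  convert hε x y hxy using 2
  ext t
  simp [𝒱, VertexCode.mem_agreement_mk]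

lemma mul_one_sub_inv_pow_lt_one {M D T m : ℕ} (hD : 0 < D) (hM : M < 2 ^ T) (hm : D * T ≤ m) :
    (M : ℝ) * (1 - (D : ℝ)⁻¹) ^ m < 1 := by
  have hD1 : (1 : ℝ) ≤ D := by exact_mod_cast hD
  have hbase : 0 ≤ 1 - (D : ℝ)⁻¹ := sub_nonneg.2 (inv_le_one_of_one_le₀ hD1)
  have hhalf : (1 - (D : ℝ)⁻¹) ^ D ≤ 1 / 2 :=
    calc (1 - (D : ℝ)⁻¹) ^ D = (1 - 1 / (D : ℝ)) ^ D := by rw [one_div]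
      _ ≤ Real.exp (-1) := Real.one_sub_div_pow_le_exp_neg hD1
      _ ≤ 1 / 2 := Real.exp_neg_one_lt_half.le
  calc (M : ℝ) * (1 - (D : ℝ)⁻¹) ^ m
      ≤ M * (1 - (D : ℝ)⁻¹) ^ (D * T) := by
        gcongr ?_ * ?_
        exact pow_le_pow_of_le_one hbase (sub_le_self _ (by positivity)) hm
    _ ≤ M * (1 / 2) ^ T := by
        rw [pow_mul]
        gcongr
    _ < 2 ^ T * (1 / 2) ^ T := by
        gcongr
        exact_mod_cast hM
    _ = 1 := by rw [← mul_pow]; norm_num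

lemma sq_le_two_pow {a : ℕ} (ha : 4 ≤ a) : a ^ 2 ≤ 2 ^ a := by
  induction a, ha using Nat.le_induction with
  | base => norm_num
  | succ k hk ih => rw [pow_succ 2 k]; nlinarith

lemma mul_choose_lt_two_pow {N b s : ℕ} (hN : N ≤ 2 ^ b) :
    N * (3 * N.choose s) < 2 ^ (b * (s + 1) + 2) :=
  calc N * (3 * N.choose s) ≤ 2 ^ b * (3 * (2 ^ b) ^ s) := by
        gcongr
        exact (Nat.choose_le_pow N s).trans (Nat.pow_le_pow_left hN s)
    _ = 3 * 2 ^ (b * (s + 1)) := by ring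
    _ < 4 * 2 ^ (b * (s + 1)) := by gcongr; norm_num
    _ = 2 ^ (b * (s + 1) + 2) := by ring

lemma mul_le_choose_two_pow_four {X b : ℕ} (hX : 16 ≤ X) (hb : b ≤ X) :
    3 * X * X * (b * (X ^ 4 + 1) + 2) ≤ (X ^ 4).choose 2 := by
  have hX4 : 12 * X ^ 3 ≤ X ^ 4 - 1 := by
    have : 16 * X ^ 3 ≤ X ^ 4 := by rw [pow_succ' X 3]; gcongr
    have : 0 < X ^ 3 := by positivity
    omega
  have hX4two : 2 ≤ X ^ 4 := (by omega : 2 ≤ X).trans (Nat.le_self_pow four_ne_zero X)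
  have hT : b * (X ^ 4 + 1) + 2 ≤ 2 * X * X ^ 4 := by
    have : b * (X ^ 4 + 1) ≤ X * (X ^ 4 + 1) := by gcongr
    have : X * 2 ≤ X * X ^ 4 := by gcongr
    linarith
  rw [Nat.choose_two_right, Nat.le_div_iff_mul_le two_pos]
  calc 3 * X * X * (b * (X ^ 4 + 1) + 2) * 2 ≤ 3 * X * X * (2 * X * X ^ 4) * 2 := by gcongr
    _ = X ^ 4 * (12 * X ^ 3) := by ring
    _ ≤ X ^ 4 * (X ^ 4 - 1) := by gcongr

lemma exists_coloring_of_le_two_pow_sq {a N n : ℕ} (ha : 5 ≤ a) (hN : N ≤ 2 ^ (a ^ 2))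
    (hn : 32 ^ a ≤ n) :
    ∃ χ : Finset (Fin N) → Bool, ¬ HasRedClique3 N 4 χ ∧ ¬ HasBlueStar N n χ := by
  let F := GaloisField 2 a
  have := Fintype.ofFinite F
  have hF : Fintype.card F = 2 ^ a := by
    rw [← Nat.card_eq_fintype_card, GaloisField.card 2 a (by omega)]
  have hX : 16 ≤ 2 ^ a := Nat.pow_le_pow_right (n := 2) two_pos (by omega : 4 ≤ a)
  have hsq : a ^ 2 ≤ 2 ^ a := sq_le_two_pow (by omega)
  obtain ⟨𝒱, h𝒱⟩ := exists_vertexCode (V := Fin N) F (A := a)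
    (by rwa [Fintype.card_fin, hF, ← pow_mul, ← sq])
    (by rw [Fintype.card_fin, hF]; exact hN.trans (Nat.pow_le_pow_right two_pos hsq))
  refine 𝒱.exists_coloring (fun x y hxy => (h𝒱 x y hxy).le) (s := (2 ^ a) ^ 4) ?_ ?_
  · calc 3 * (2 ^ a) ^ 4 ≤ 2 ^ a * (2 ^ a) ^ 4 := by gcongr; omega
      _ = 32 ^ a := by rw [← pow_succ', pow_right_comm]; norm_num
      _ ≤ n := hn
  · have hcount := mul_one_sub_inv_pow_lt_one (by positivity) (mul_choose_lt_two_pow hN)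
      (mul_le_choose_two_pow_four hX hsq)
    push_cast at hcount
    simpa only [hF, Fintype.card_bool, Nat.cast_pow, Nat.cast_ofNat] using hcount

lemma floor_two_rpow_logb_sq_le {n : ℕ} (hn : 32 ^ 5 ≤ n) :
    ⌊(2 : ℝ) ^ (1 / 36 * Real.logb 2 n ^ 2)⌋₊ ≤ 2 ^ (Nat.log 32 n ^ 2) := by
  set a := Nat.log 32 n
  have ha : (5 : ℝ) ≤ a := by exact_mod_cast Nat.le_log_of_pow_le (by norm_num) hn
  have hn1 : (1 : ℝ) ≤ n := by exact_mod_cast (show 1 ≤ n by omega)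
  have hlog : Real.logb 2 n ≤ 5 * (a + 1) := by
    have hlt : n < 32 ^ (a + 1) := Nat.lt_pow_succ_log_self (by norm_num) n
    have hpow : (2 : ℝ) ^ (5 * ((a : ℝ) + 1)) = ((32 ^ (a + 1) : ℕ) : ℝ) := by
      rw [Real.rpow_mul (by norm_num)]
      norm_cast
    rw [Real.logb_le_iff_le_rpow (by norm_num) (by positivity), hpow]
    exact_mod_cast hlt.le
  have hexp : 1 / 36 * Real.logb 2 n ^ 2 ≤ (a ^ 2 : ℕ) := by
    have : Real.logb 2 n ^ 2 ≤ (6 * a) ^ 2 :=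
      pow_le_pow_left₀ (Real.logb_nonneg (by norm_num) hn1) (by linarith) 2
    push_cast
    linarith
  refine Nat.floor_le_of_le ?_
  calc (2 : ℝ) ^ (1 / 36 * Real.logb 2 n ^ 2) ≤ (2 : ℝ) ^ ((a ^ 2 : ℕ) : ℝ) :=
        Real.rpow_le_rpow_of_exponent_le (by norm_num) hexp
    _ = ((2 ^ (a ^ 2) : ℕ) : ℝ) := by rw [Real.rpow_natCast]; norm_cast

/-- There is `c > 0` such that for all sufficiently large `n`,
`r(K₄⁽³⁾, Sₙ) ≥ 2^(c (log₂ n)²)`: with `N = ⌊2^(c (log₂ n)²)⌋` there is a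
2-coloring of `K_N^(3)` with no red `K₄⁽³⁾` and no blue `Sₙ`. -/
theorem lower_bound_K4_star :
    ∃ c : ℝ, 0 < c ∧ ∃ n₀ : ℕ, ∀ n : ℕ, n₀ ≤ n →
      ∀ N : ℕ, N = ⌊(2 : ℝ) ^ (c * (Real.logb 2 n) ^ 2)⌋₊ →
        ∃ χ : Finset (Fin N) → Bool, ¬ HasRedClique3 N 4 χ ∧ ¬ HasBlueStar N n χ := by
  refine ⟨1 / 36, by norm_num, 32 ^ 5, ?_⟩
  rintro n hn N rfl
  exact exists_coloring_of_le_two_pow_sq (Nat.le_log_of_pow_le (by norm_num) hn)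
    (floor_two_rpow_logb_sq_le hn) (Nat.pow_log_le_self 32 (by omega))
end

section
/- For every integer s ≥ 5 there exists a constant c_s > 0 such that for all sufficiently large n, r(K_s^(3), S_n) ≥ 2^{c_s·n}; that is, there exists a 2-coloring of K_N^(3) with N = ⌊2^{c_s·n}⌋ that contains no red copy of K_s^(3) and no blue copy of S_n. -/
/-!
Take a random 2-coloring `f` of the pairs of vertices. By the first-moment argument of Erdős it can
be chosen without a monochromatic set of `m` vertices as long as `N` is below about `2 ^ (m / 2)`.
Color a triple `i < j < k` red when `ij` and `jk` receive different colors.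

On the vertex set of a red clique, `f` has no monochromatic path `i < j < k`, so the color of `uv`
with `u < v` is the color of an edge from `u` to the right but not of one from `v` to the right. The
sets of colors to the right are therefore distinct, and there are only `2 ^ 2` of them.

In a blue star with center `v`, a quarter of the leaves lie on the same side of `v` and are joined
to it in the same color. A blue triple passes that color on to the pair of leaves, so these leaves
form a monochromatic set, of size at least `m` once `n ≥ 4 * m`.
-/

open Finset Fintype

section Coloring

variable {E C : Type*}

/-- `f` is constant on `A`, as a coloring of the points of `A`; a coloring of `r`-sets is
monochromatic on a vertex set `S` when this holds for `A = S.powersetCard r`. -/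
def IsMonochromaticOn (f : E → C) (A : Finset E) : Prop :=
  ∃ c, ∀ e ∈ A, f e = c

variable [Fintype C]

open Classical in
theorem card_filter_eq_const_mul_pow [Fintype E] (A : Finset E) (c : C) :
    #{f : E → C | ∀ e ∈ A, f e = c} * card C ^ #A = card C ^ card E := by
  have hpi : ({f : E → C | ∀ e ∈ A, f e = c} : Finset (E → C)) =
      piFinset fun e ↦ if e ∈ A then {c} else univ := by
    ext f
    simp only [mem_filter_univ, mem_piFinset]
    refine forall_congr' fun e ↦ ?_
    by_cases he : e ∈ A <;> simp [he]
  have hcard : #{f : E → C | ∀ e ∈ A, f e = c} = card C ^ #Aᶜ := by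
    simp [hpi, card_piFinset, apply_ite card, prod_ite, filter_not, compl_eq_univ_sdiff]
  rw [hcard, ← pow_add, card_compl_add_card]

open Classical in
theorem card_filter_isMonochromaticOn_mul_pow_le [Fintype E] (A : Finset E) :
    #{f : E → C | IsMonochromaticOn f A} * card C ^ #A ≤ card C * card C ^ card E := by
  have hunion : ({f : E → C | IsMonochromaticOn f A} : Finset (E → C)) =
      univ.biUnion fun c ↦ {f : E → C | ∀ e ∈ A, f e = c} := by
    ext f
    rw [mem_filter_univ]
    simp [IsMonochromaticOn]
  calc #{f : E → C | IsMonochromaticOn f A} * card C ^ #A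
      ≤ (∑ c : C, #{f : E → C | ∀ e ∈ A, f e = c}) * card C ^ #A := by
        rw [hunion]
        gcongr
        exact card_biUnion_le
    _ = card C * card C ^ card E := by
        simp [sum_mul, card_filter_eq_const_mul_pow]

theorem exists_forall_not_isMonochromaticOn [Finite E] [Nonempty C] {k : ℕ}
    (𝓕 : Finset (Finset E)) (hk : ∀ A ∈ 𝓕, k ≤ #A) (h𝓕 : #𝓕 * card C < card C ^ k) :
    ∃ f : E → C, ∀ A ∈ 𝓕, ¬ IsMonochromaticOn f A := by
  classical
  cases nonempty_fintype E
  by_contra! hmono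
  have hcover : (univ : Finset (E → C)) ⊆ 𝓕.biUnion fun A ↦ {f | IsMonochromaticOn f A} :=
    fun f _ ↦ by simpa using hmono f
  have hcount : card C ^ k * card C ^ card E ≤ #𝓕 * card C * card C ^ card E := by
    calc card C ^ k * card C ^ card E
        = #(univ : Finset (E → C)) * card C ^ k := by
          rw [Finset.card_univ, Fintype.card_fun, mul_comm]
      _ ≤ (∑ A ∈ 𝓕, #{f : E → C | IsMonochromaticOn f A}) * card C ^ k := by
          gcongr
          exact (card_le_card hcover).trans card_biUnion_le
      _ ≤ ∑ A ∈ 𝓕, #{f : E → C | IsMonochromaticOn f A} * card C ^ #A := by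
          rw [sum_mul]
          gcongr with A hA
          · exact card_pos
          · exact hk A hA
      _ ≤ ∑ _A ∈ 𝓕, card C * card C ^ card E :=
          sum_le_sum fun A _ ↦ card_filter_isMonochromaticOn_mul_pow_le A
      _ = #𝓕 * card C * card C ^ card E := by
          rw [sum_const, smul_eq_mul, mul_assoc]
  exact h𝓕.not_ge (Nat.le_of_mul_le_mul_right hcount (pow_pos card_pos _))

end Coloring

theorem exists_forall_not_isMonochromaticOn_powersetCard {V C : Type*} [Fintype V] [Fintype C]
    [Nonempty C] {m r : ℕ} (h : (card V).choose m * card C < card C ^ m.choose r) :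
    ∃ f : Finset V → C, ∀ S : Finset V, #S = m → ¬ IsMonochromaticOn f (S.powersetCard r) := by
  classical
  obtain ⟨f, hf⟩ := exists_forall_not_isMonochromaticOn (C := C) (k := m.choose r)
    ((univ.powersetCard m).image fun S : Finset V ↦ S.powersetCard r)
    (by
      simp only [forall_mem_image, mem_powersetCard_univ]
      rintro S rfl
      rw [card_powersetCard])
    (lt_of_le_of_lt (by grw [card_image_le, card_powersetCard, Finset.card_univ]) h)
  exact ⟨f, fun S hS ↦ hf _ (mem_image_of_mem _ (by simpa using hS))⟩

theorem isMonochromaticOn_powersetCard_two {V C : Type*} [LinearOrder V] {f : Finset V → C}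
    {S : Finset V} {c : C} (h : ∀ a ∈ S, ∀ b ∈ S, a < b → f {a, b} = c) :
    IsMonochromaticOn f (S.powersetCard 2) := by
  refine ⟨c, fun e he ↦ ?_⟩
  obtain ⟨heS, hcard⟩ := mem_powersetCard.mp he
  obtain ⟨a, b, hab, rfl⟩ := card_eq_two.mp hcard
  have ha : a ∈ S := heS (by simp)
  have hb : b ∈ S := heS (by simp)
  rcases lt_or_gt_of_ne hab with hlt | hgt
  · exact h a ha b hb hlt
  · rw [pair_comm]
    exact h b hb a ha hgt

theorem card_le_two_pow_of_forall_lt_ne {V C : Type*} [LinearOrder V] [Fintype C] {S : Finset V}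
    {f : V → V → C} (hf : ∀ i ∈ S, ∀ j ∈ S, ∀ k ∈ S, i < j → j < k → f i j ≠ f j k) :
    #S ≤ 2 ^ card C := by
  classical
  let rightColors (u : V) : Finset C := {v ∈ S | u < v}.image (f u)
  have hne : ∀ u ∈ S, ∀ v ∈ S, u < v → rightColors u ≠ rightColors v := by
    intro u hu v hv huv heq
    have hmem : f u v ∈ rightColors u := mem_image_of_mem _ (by simp [hv, huv])
    obtain ⟨w, hw, hvw⟩ := mem_image.mp (heq ▸ hmem)
    obtain ⟨hwS, hlt⟩ := mem_filter.mp hw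
    exact hf u hu v hv w hwS huv hlt hvw.symm
  have hinj : Set.InjOn rightColors S := by
    intro u hu v hv heq
    by_contra huv
    rcases lt_or_gt_of_ne huv with h | h
    · exact hne u hu v hv h heq
    · exact hne v hv u hu h heq.symm
  calc #S ≤ #(univ : Finset (Finset C)) := card_le_card_of_injOn _ (by simp) hinj
    _ = 2 ^ card C := by rw [Finset.card_univ, Fintype.card_finset]

section ShiftColoring

variable {V C : Type*} [LinearOrder V] [DecidableEq C]

/-- The coloring of triples induced by a coloring `f` of pairs: for `i < j < k`, the triple
`{i, j, k}` is red (`true`) when the pairs `{i, j}` and `{j, k}`, adjacent in the shift graph, have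
different colors. The two filters remove the maximum and the minimum of `T`, so that no ordering of
its elements has to be chosen. -/
def shiftColoring (f : Finset V → C) (T : Finset V) : Bool :=
  decide (f {x ∈ T | ∃ y ∈ T, x < y} ≠ f {x ∈ T | ∃ y ∈ T, y < x})

theorem shiftColoring_triple (f : Finset V → C) {i j k : V} (hij : i < j) (hjk : j < k) :
    shiftColoring f {i, j, k} = decide (f {i, j} ≠ f {j, k}) := by
  have hleft : ({x ∈ {i, j, k} | ∃ y ∈ ({i, j, k} : Finset V), x < y} : Finset V) = {i, j} := by
    grind
  have hright : ({x ∈ {i, j, k} | ∃ y ∈ ({i, j, k} : Finset V), y < x} : Finset V) = {j, k} := by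
    grind
  rw [shiftColoring, hleft, hright]

theorem card_le_two_pow_of_shiftColoring_eq_true [Fintype C] {f : Finset V → C} {S : Finset V}
    (hS : ∀ T ⊆ S, #T = 3 → shiftColoring f T = true) : #S ≤ 2 ^ card C := by
  refine card_le_two_pow_of_forall_lt_ne (f := fun i j ↦ f {i, j}) ?_
  intro i hi j hj k hk hij hjk
  have hred := hS {i, j, k} (by simp [insert_subset_iff, hi, hj, hk])
    (card_eq_three.mpr ⟨i, j, k, hij.ne, (hij.trans hjk).ne, hjk.ne, rfl⟩)
  simpa [shiftColoring_triple f hij hjk] using hred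

theorem isMonochromaticOn_of_shiftColoring_eq_false {f : Finset V → C} {v : V} {S : Finset V}
    {c : C} (hside : (∀ a ∈ S, a < v) ∨ ∀ a ∈ S, v < a) (hc : ∀ a ∈ S, f {v, a} = c)
    (hblue : ∀ a ∈ S, ∀ b ∈ S, a ≠ b → shiftColoring f {v, a, b} = false) :
    IsMonochromaticOn f (S.powersetCard 2) := by
  refine isMonochromaticOn_powersetCard_two (c := c) fun a ha b hb hab ↦ ?_
  have hvab := hblue a ha b hb hab.ne
  rcases hside with hlt | hgt
  · have hperm : ({v, a, b} : Finset V) = {a, b, v} := by grind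
    rw [hperm, shiftColoring_triple f hab (hlt b hb)] at hvab
    have hpair : f {a, b} = f {b, v} := by simpa using hvab
    rw [hpair, pair_comm, hc b hb]
  · rw [shiftColoring_triple f (hgt a ha) hab] at hvab
    have hpair : f {v, a} = f {a, b} := by simpa using hvab
    rw [← hpair, hc a ha]

theorem exists_subset_isMonochromaticOn_of_shiftColoring_eq_false [Fintype C] {f : Finset V → C}
    {v : V} {S : Finset V} {m : ℕ} (hv : v ∉ S) (hm : 2 * card C * m ≤ #S)
    (hblue : ∀ a ∈ S, ∀ b ∈ S, a ≠ b → shiftColoring f {v, a, b} = false) :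
    ∃ T ⊆ S, #T = m ∧ IsMonochromaticOn f (T.powersetCard 2) := by
  have : Nonempty C := ⟨f ∅⟩
  let sideAndColor (a : V) : Bool × C := (decide (a < v), f {v, a})
  obtain ⟨⟨side, c⟩, -, hfiber⟩ := exists_le_card_fiber_of_mul_le_card_of_maps_to
    (s := S) (t := univ) (f := sideAndColor) (n := m) (by simp) univ_nonempty (by simpa using hm)
  obtain ⟨T, hT, hTm⟩ := exists_subset_card_eq hfiber
  have hTS : T ⊆ S := hT.trans (filter_subset _ _)
  have hTfiber : ∀ a ∈ T, decide (a < v) = side ∧ f {v, a} = c := fun a ha ↦ by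
    simpa [sideAndColor] using (mem_filter.mp (hT ha)).2
  refine ⟨T, hTS, hTm, isMonochromaticOn_of_shiftColoring_eq_false (v := v) ?_
    (fun a ha ↦ (hTfiber a ha).2) fun a ha b hb ↦ hblue a (hTS ha) b (hTS hb)⟩
  cases side with
  | true => exact .inl fun a ha ↦ by simpa using (hTfiber a ha).1
  | false =>
    refine .inr fun a ha ↦ lt_of_le_of_ne (by simpa using (hTfiber a ha).1) ?_
    rintro rfl
    exact hv (hTS ha)

end ShiftColoring

theorem choose_mul_two_lt_two_pow_choose_two {N k m : ℕ} (hN : N ≤ 2 ^ k) (hm : 2 * k + 3 ≤ m) :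
    N.choose m * 2 < 2 ^ m.choose 2 := by
  have hexp : k * m + 1 < m.choose 2 := by
    obtain ⟨t, rfl⟩ : ∃ t, m = t + 1 := ⟨m - 1, by omega⟩
    rw [Nat.choose_two_right, Nat.add_sub_cancel, ← Nat.succ_le_iff, Nat.le_div_iff_mul_le two_pos]
    nlinarith
  calc N.choose m * 2 ≤ (2 ^ k) ^ m * 2 := by
        gcongr
        exact (Nat.choose_le_pow N m).trans (Nat.pow_le_pow_left hN m)
    _ = 2 ^ (k * m + 1) := by rw [← pow_mul, pow_succ]
    _ < 2 ^ m.choose 2 := Nat.pow_lt_pow_right one_lt_two hexp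

theorem exists_not_hasRedClique3_not_hasBlueStar {N s n k : ℕ} (hs : 5 ≤ s) (hN : N ≤ 2 ^ k)
    (hn : 4 * (2 * k + 3) ≤ n) :
    ∃ χ : Finset (Fin N) → Bool, ¬ HasRedClique3 N s χ ∧ ¬ HasBlueStar N n χ := by
  obtain ⟨f, hf⟩ := exists_forall_not_isMonochromaticOn_powersetCard (V := Fin N) (C := Bool)
    (m := 2 * k + 3) (r := 2) (by simpa using choose_mul_two_lt_two_pow_choose_two hN le_rfl)
  refine ⟨shiftColoring f, ?_, ?_⟩
  · rintro ⟨S, rfl, hred⟩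
    have hcard : #S ≤ 4 := by simpa using card_le_two_pow_of_shiftColoring_eq_true hred
    omega
  · rintro ⟨v, S, hv, rfl, hblue⟩
    obtain ⟨T, -, hT, hmono⟩ := exists_subset_isMonochromaticOn_of_shiftColoring_eq_false hv
      (m := 2 * k + 3) (by simpa using hn) hblue
    exact hf T hT hmono

/-- For every `s ≥ 5` there is `c_s > 0` such that for all sufficiently large `n`,
`r(K_s^(3), Sₙ) ≥ 2^(c_s n)`: with `N = ⌊2^(c_s n)⌋` there is a 2-coloring of
`K_N^(3)` with no red `K_s^(3)` and no blue `Sₙ`. -/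
theorem lower_bound_Ks_star :
    ∀ s : ℕ, 5 ≤ s → ∃ c : ℝ, 0 < c ∧ ∃ n₀ : ℕ, ∀ n : ℕ, n₀ ≤ n →
      ∀ N : ℕ, N = ⌊(2 : ℝ) ^ (c * n)⌋₊ →
        ∃ χ : Finset (Fin N) → Bool, ¬ HasRedClique3 N s χ ∧ ¬ HasBlueStar N n χ := by
  intro s hs
  refine ⟨1 / 16, by norm_num, 48, ?_⟩
  rintro n hn N rfl
  have hexp : 1 / 16 * (n : ℝ) ≤ (n / 16 + 1 : ℕ) := by
    have hlt : n ≤ 16 * (n / 16 + 1) := by omega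
    have : (n : ℝ) ≤ 16 * (n / 16 + 1 : ℕ) := by exact_mod_cast hlt
    linarith
  refine exists_not_hasRedClique3_not_hasBlueStar (k := n / 16 + 1) hs ?_ (by omega)
  refine Nat.floor_le_of_le ?_
  calc (2 : ℝ) ^ (1 / 16 * (n : ℝ)) ≤ 2 ^ ((n / 16 + 1 : ℕ) : ℝ) :=
        Real.rpow_le_rpow_of_exponent_le one_le_two hexp
    _ = ((2 ^ (n / 16 + 1) : ℕ) : ℝ) := by rw [Real.rpow_natCast]; norm_cast
end

section
/- For every integer s ≥ 5 there exists a constant c'_s > 0 such that for all integers n ≥ 3, r(K_s^(3), S_n) ≤ 2^{c'_s·n}; that is, if N ≥ 2^{c'_s·n}, then every 2-coloring of K_N^(3) contains a red copy of K_s^(3) or a blue copy of S_n. -/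
/-!
Reveal vertices one at a time, keeping a red clique `C`, of fewer than `s` vertices, and a
reservoir `A`. For a new vertex `x`, shrink `A` by a factor of about `2 ^ #C` so that for each
`v ∈ C` the color of `{v, x, y}` does not depend on `y ∈ A`. If all these colors are red, then `x`
joins `C`; otherwise it becomes a leaf of a blue star centered at some `v ∈ C`. Only `x` and the
vertices of `C` are compared, so a step costs a factor `2 ^ s` at most, and after `s * n` steps
either `C` has `s` vertices or one of the at most `s` stars has `n` leaves: `2 ^ (s ^ 2 * n)`
vertices are enough.
-/

open Finset Function

variable {ι V : Type*} {χ : Finset V → Bool} {C A A' R : Finset V} {m : V → ℕ} {s t n k : ℕ}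
  {v w x : V}

/-- A vertex set all of whose triples are red, as in `HasRedClique3` but over an arbitrary vertex
type. -/
def IsRedClique (χ : Finset V → Bool) (R : Finset V) : Prop :=
  ∀ T ⊆ R, #T = 3 → χ T = true

lemma isRedClique_empty : IsRedClique χ ∅ := by
  intro T hT hcard
  simp [subset_empty.1 hT] at hcard

variable [DecidableEq V]

/-- The blue pairs in the link of `v`, as a graph. The vertex `v` itself is not excluded: its edges
record the colors of pairs `{v, a}`, which have no meaning. -/
def blueLink (χ : Finset V → Bool) (v : V) : SimpleGraph V where
  Adj a b := a ≠ b ∧ χ {v, a, b} = false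
  symm := ⟨fun a b h ↦ ⟨h.1.symm, by rw [pair_comm b a]; exact h.2⟩⟩

lemma IsRedClique.insert (hR : IsRedClique χ R) (hx : (blueLink χ x).IsIndepSet R) :
    IsRedClique χ (insert x R) := by
  intro T hT hcard
  by_cases hxT : x ∈ T
  · obtain ⟨a, b, hab, hpair⟩ := card_eq_two.1 (by rw [card_erase_of_mem hxT, hcard])
    have hsub : {a, b} ⊆ R := hpair ▸ subset_insert_iff.1 hT
    rw [← insert_erase hxT, hpair, ← Bool.not_eq_false]
    exact fun hblue ↦ hx (hsub (by simp)) (hsub (by simp)) hab ⟨hab, hblue⟩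
  · exact hR T ((subset_insert_iff_of_notMem hxT).1 hT) hcard

lemma exists_subset_card_ge_forall_or_forall_not {α : Type*} (I : Finset ι) (p : ι → α → Prop)
    {B : Finset α} {M : ℕ} (hB : 2 ^ #I * M ≤ #B) :
    ∃ B' ⊆ B, M ≤ #B' ∧ ∀ i ∈ I, (∀ b ∈ B', p i b) ∨ ∀ b ∈ B', ¬p i b := by
  classical
  obtain ⟨D, -, hD⟩ := exists_le_card_fiber_of_mul_le_card_of_maps_to
    (f := fun b ↦ {i ∈ I | p i b}) (fun b _ ↦ mem_powerset.2 (filter_subset _ I))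
    (powerset_nonempty I) (by rwa [card_powerset])
  refine ⟨_, filter_subset _ _, hD, fun i hi ↦ ?_⟩
  have mem_iff : ∀ b ∈ B.filter (fun b ↦ {i ∈ I | p i b} = D), i ∈ D ↔ p i b := by
    intro b hb
    rw [← (mem_filter.1 hb).2, mem_filter, and_iff_right hi]
  by_cases hiD : i ∈ D
  · exact .inl fun b hb ↦ (mem_iff b hb).1 hiD
  · exact .inr fun b hb hp ↦ hiD ((mem_iff b hb).2 hp)

/-- The alternative to be forced inside a reservoir `A`, relative to a set `C` of vertices already
selected for the red clique: either `A` supplies `t` further vertices of the clique, or it supplies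
all the leaves of a blue star with `m v + 1` leaves at some `v`. Any vertex other than `v` can serve
as the last leaf, so `m v` counts the steps still needed at `v`. Of the triples meeting both `C` and
the new vertices `R`, only those with two vertices in `R` are controlled; the others are dealt with
when their second vertex enters `C`. -/
def RedCliqueOrBlueStar (χ : Finset V → Bool) (C A : Finset V) (t : ℕ) (m : V → ℕ) : Prop :=
  (∃ R ⊆ A, #R = t ∧ IsRedClique χ R ∧ ∀ v ∈ C, (blueLink χ v).IsIndepSet R) ∨
    ∃ v, ∃ S ⊆ A, v ∉ S ∧ (blueLink χ v).IsNClique (m v + 1) S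

namespace RedCliqueOrBlueStar

lemma zero : RedCliqueOrBlueStar χ C A 0 m :=
  .inl ⟨∅, empty_subset A, card_empty, isRedClique_empty, by simp [SimpleGraph.IsIndepSet]⟩

lemma of_eq_zero (hxA : x ∈ A) (hwx : w ≠ x) (hw : m w = 0) :
    RedCliqueOrBlueStar χ C A t m :=
  .inr ⟨w, {x}, singleton_subset_iff.2 hxA, by simpa using hwx,
    by simp [hw]⟩

lemma of_forall_not_adj (hxA : x ∈ A) (hA' : A' ⊆ A.erase x)
    (hred : ∀ v ∈ C, ∀ y ∈ A', ¬(blueLink χ v).Adj x y)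
    (h : RedCliqueOrBlueStar χ (insert x C) A' t m) :
    RedCliqueOrBlueStar χ C A (t + 1) m := by
  rcases h with ⟨R, hRA', hcard, hR, hindep⟩ | ⟨v, S, hSA', hstar⟩
  · have hRA : R ⊆ A.erase x := hRA'.trans hA'
    have hxR : x ∉ R := fun hx ↦ notMem_erase x A (hRA hx)
    refine .inl ⟨insert x R, insert_subset hxA (hRA.trans (erase_subset x A)),
      by rw [card_insert_of_notMem hxR, hcard], hR.insert (hindep x (mem_insert_self x C)),
      fun v hv ↦ ?_⟩
    rw [coe_insert]
    exact (hindep v (mem_insert_of_mem hv)).insert fun y hy _ ↦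
      ⟨hred v hv y (hRA' hy), fun hadj ↦ hred v hv y (hRA' hy) hadj.symm⟩
  · exact .inr ⟨v, S, hSA'.trans (hA'.trans (erase_subset x A)), hstar⟩

lemma of_forall_adj (hxA : x ∈ A) (hA' : A' ⊆ A) (hwx : w ≠ x)
    (hblue : ∀ y ∈ A', (blueLink χ w).Adj x y) (hw : m w = k + 1)
    (h : RedCliqueOrBlueStar χ C A' t (update m w k)) :
    RedCliqueOrBlueStar χ C A t m := by
  rcases h with ⟨R, hRA', hR⟩ | ⟨v, S, hSA', hvS, hclique⟩
  · exact .inl ⟨R, hRA'.trans hA', hR⟩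
  · obtain rfl | hvw := eq_or_ne v w
    · rw [update_self] at hclique
      refine .inr ⟨v, insert x S, insert_subset hxA (hSA'.trans hA'), by simp [hwx, hvS], ?_⟩
      rw [hw]
      exact hclique.insert fun y hy ↦ hblue y (hSA' hy)
    · rw [update_of_ne hvw] at hclique
      exact .inr ⟨v, S, hSA'.trans hA', hvS, hclique⟩

end RedCliqueOrBlueStar

lemma exists_subset_erase_forall_adj_or_forall_not_adj (G : ι → SimpleGraph V) {I : Finset ι}
    (hxA : x ∈ A) (hI : #I < s) (hA : 2 ^ (s * (k + 1)) ≤ #A) :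
    ∃ A' ⊆ A.erase x, 2 ^ (s * k) ≤ #A' ∧ ∀ i ∈ I,
      (∀ y ∈ A', (G i).Adj x y) ∨ ∀ y ∈ A', ¬(G i).Adj x y := by
  refine exists_subset_card_ge_forall_or_forall_not I _ ?_
  have hpos : 0 < 2 ^ #I * 2 ^ (s * k) := by positivity
  have hbound : 2 * (2 ^ #I * 2 ^ (s * k)) ≤ #A := calc
    2 * (2 ^ #I * 2 ^ (s * k)) = 2 ^ (#I + 1) * 2 ^ (s * k) := by ring
    _ ≤ 2 ^ s * 2 ^ (s * k) := by gcongr <;> omega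
    _ = 2 ^ (s * (k + 1)) := by ring
    _ ≤ #A := hA
  rw [card_erase_of_mem hxA]
  omega

lemma sum_update_add_of_eq_add {M : Type*} [DecidableEq ι] [AddCommMonoid M] {I : Finset ι} {i : ι}
    {f : ι → M} {a b : M} (hi : i ∈ I) (hf : f i = a + b) :
    ∑ j ∈ I, update f i a j + b = ∑ j ∈ I, f j := by
  rw [sum_update_of_mem hi, sum_eq_add_sum_sdiff_singleton_of_mem hi f, hf, add_right_comm]

theorem redCliqueOrBlueStar_of_two_pow_le_card (hCA : Disjoint C A) (hm : ∀ v, m v ≤ n)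
    (hs : #C + t ≤ s) (hk : t * (n + 1) + ∑ v ∈ C, m v ≤ k) (hA : 2 ^ (s * k) ≤ #A) :
    RedCliqueOrBlueStar χ C A t m := by
  induction k generalizing C A t m with
  | zero =>
    obtain rfl : t = 0 := by simpa using (Nat.le_add_right _ _).trans hk
    exact .zero
  | succ k ih =>
    cases t with
    | zero => exact .zero
    | succ t =>
    obtain ⟨x, hxA⟩ : A.Nonempty := card_pos.1 ((Nat.two_pow_pos _).trans_le hA)
    have hxC : x ∉ C := disjoint_right.1 hCA hxA
    obtain ⟨A', hA', hcard, hmono⟩ :=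
      exists_subset_erase_forall_adj_or_forall_not_adj (blueLink χ) hxA (I := C) (by omega) hA
    have hA'A : A' ⊆ A := hA'.trans (erase_subset x A)
    have hCA' : Disjoint C A' := hCA.mono_right hA'A
    by_cases hred : ∀ v ∈ C, ∀ y ∈ A', ¬(blueLink χ v).Adj x y
    · refine .of_forall_not_adj hxA hA' hred (ih ?_ hm ?_ ?_ hcard)
      · exact disjoint_insert_left.2 ⟨fun hx ↦ notMem_erase x A (hA' hx), hCA'⟩
      · rw [card_insert_of_notMem hxC]
        omega
      · rw [sum_insert hxC]
        linarith [hm x]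
    · obtain ⟨w, hwC, hw⟩ : ∃ w ∈ C, ¬∀ y ∈ A', ¬(blueLink χ w).Adj x y := by
        simpa only [not_forall, exists_prop] using hred
      have hwx : w ≠ x := ne_of_mem_of_not_mem hwC hxC
      cases hmw : m w with
      | zero => exact .of_eq_zero hxA hwx hmw
      | succ j =>
        refine .of_forall_adj hxA hA'A hwx ((hmono w hwC).resolve_right hw) hmw
          (ih hCA' (fun v ↦ ?_) hs ?_ hcard)
        · exact (update_le_self_iff.2 (by omega) v).trans (hm v)
        · have := sum_update_add_of_eq_add hwC hmw
          omega

theorem upper_bound_Ks_star_general {s n N : ℕ} (hN : 2 ^ (s ^ 2 * n) ≤ N)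
    (χ : Finset (Fin N) → Bool) : HasRedClique3 N s χ ∨ HasBlueStar N n χ := by
  cases n with
  | zero => exact .inr ⟨⟨0, (Nat.two_pow_pos _).trans_le hN⟩, ∅, by simp⟩
  | succ n =>
    have hcard : 2 ^ (s * (s * (n + 1))) ≤ #(univ : Finset (Fin N)) := by
      rwa [card_fin, ← mul_assoc, ← sq]
    have halt : RedCliqueOrBlueStar χ ∅ univ s fun _ ↦ n :=
      redCliqueOrBlueStar_of_two_pow_le_card (disjoint_empty_left _) (fun _ ↦ le_rfl)
        (by simp) (by simp) hcard
    rcases halt with ⟨R, -, hR, hred, -⟩ | ⟨v, S, -, hvS, hS⟩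
    · exact .inl ⟨R, hR, hred⟩
    · exact .inr ⟨v, S, hvS, hS.card_eq, fun a ha b hb hab ↦ (hS.isClique ha hb hab).2⟩

/-- For every `s ≥ 5` there is `c'_s > 0` such that for all `n ≥ 3`,
`r(K_s^(3), Sₙ) ≤ 2^(c'_s n)`: if `N ≥ 2^(c'_s n)` then every 2-coloring of
`K_N^(3)` contains a red `K_s^(3)` or a blue `Sₙ`. -/
theorem upper_bound_Ks_star :
    ∀ s : ℕ, 5 ≤ s → ∃ c' : ℝ, 0 < c' ∧ ∀ n : ℕ, 3 ≤ n →
      ∀ N : ℕ, (2 : ℝ) ^ (c' * n) ≤ N →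
        ∀ χ : Finset (Fin N) → Bool, HasRedClique3 N s χ ∨ HasBlueStar N n χ := by
  refine fun s _ ↦ ⟨(s ^ 2 : ℕ), by positivity, fun n _ N hN ↦ upper_bound_Ks_star_general ?_⟩
  exact_mod_cast hN
end

section
/- For every integer n ≥ 5 and every positive integer N with N ≤ (3/2)^{n/2}, there exists a 2-coloring of K_N^(3) that contains no red copy of K_5^(3) and no blue copy of S_n. -/
/-!
Label every pair of vertices with an element of `ZMod 3`, and colour a triple red when its three
pair labels add up to `1`. Five vertices span `10` triples and each of their pairs lies in `3` of
these, so an all-red `K₅` would give `10 = 3 * (sum of the labels) = 0` in `ZMod 3`.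

For uniformly random labels, fix a centre `v` and a leaf set `S` of size `n`. Given the labels of
the pairs through `v`, blueness of `{v, a, b}` forbids exactly one value for the label of `{a, b}`,
so all `n.choose 2` such triples are blue with probability `(2 / 3) ^ n.choose 2`. A union bound
over the `N * (N - 1).choose n ≤ N ^ (n + 1) / n!` pairs `(v, S)` gives a good labelling, because
`N ^ (n + 1) ≤ (3 / 2) ^ (n.choose 2 + n)` and `(3 / 2) ^ n < n!`.
-/

open Finset

section FacetSum

variable {V A : Type*} [DecidableEq V] [AddCommMonoid A]

/-- The sum of the labels of the facets `T \ {x}` of `T`. For a triple `T` these are its three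
pairs; labels are put on all finite sets so that no separate type of pairs is needed. -/
def facetSum (φ : Finset V → A) (T : Finset V) : A :=
  ∑ x ∈ T, φ (T.erase x)

/-- The colouring that makes `T` red (`true`) exactly when its facet labels add up to `c`. -/
def facetSumColoring [DecidableEq A] (φ : Finset V → A) (c : A) (T : Finset V) : Bool :=
  decide (facetSum φ T = c)

lemma facetSum_insert (φ : Finset V → A) {v : V} {e : Finset V} (hv : v ∉ e) :
    facetSum φ (insert v e) = φ e + ∑ x ∈ e, φ ((insert v e).erase x) := by
  rw [facetSum, sum_insert hv, erase_insert hv]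

lemma sum_facetSum_powersetCard (φ : Finset V → A) (S : Finset V) (k : ℕ) :
    ∑ T ∈ S.powersetCard (k + 1), facetSum φ T = (#S - k) • ∑ e ∈ S.powersetCard k, φ e := by
  have sum_over_extensions : ∀ e ∈ S.powersetCard k, ∑ _x ∈ S \ e, φ e = (#S - k) • φ e := by
    intro e he
    obtain ⟨heS, hek⟩ := mem_powersetCard.1 he
    rw [sum_const, card_sdiff_of_subset heS, hek]
  simp only [facetSum]
  rw [smul_sum, ← sum_congr rfl sum_over_extensions, sum_sigma', sum_sigma']
  refine sum_bij' (fun p _ => ⟨p.1.erase p.2, p.2⟩) (fun p _ => ⟨insert p.2 p.1, p.2⟩)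
    ?_ ?_ ?_ ?_ fun _ _ => rfl
  · rintro ⟨T, x⟩ h
    simp only [mem_sigma, mem_powersetCard, mem_sdiff] at h ⊢
    obtain ⟨⟨hTS, hT⟩, hx⟩ := h
    exact ⟨⟨(erase_subset x T).trans hTS, by rw [card_erase_of_mem hx, hT, Nat.add_sub_cancel]⟩,
      hTS hx, notMem_erase x T⟩
  · rintro ⟨e, x⟩ h
    simp only [mem_sigma, mem_powersetCard, mem_sdiff] at h ⊢
    obtain ⟨⟨heS, he⟩, hxS, hxe⟩ := h
    exact ⟨⟨insert_subset hxS heS, by rw [card_insert_of_notMem hxe, he]⟩, mem_insert_self x e⟩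
  · rintro ⟨T, x⟩ h
    simp only [insert_erase (mem_sigma.1 h).2]
  · rintro ⟨e, x⟩ h
    simp only [erase_insert (mem_sdiff.1 (mem_sigma.1 h).2).2]

lemma not_hasRedClique3_facetSumColoring [DecidableEq A] {N s : ℕ} {c : A}
    (hc : ∀ a : A, s.choose 3 • c ≠ (s - 2) • a) (φ : Finset (Fin N) → A) :
    ¬ HasRedClique3 N s (facetSumColoring φ c) := by
  rintro ⟨S, rfl, hred⟩
  refine hc (∑ e ∈ S.powersetCard 2, φ e) ?_
  have facetSum_eq : ∀ T ∈ S.powersetCard 3, facetSum φ T = c := by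
    intro T hT
    obtain ⟨hTS, hcard⟩ := mem_powersetCard.1 hT
    exact of_decide_eq_true (hred T hTS hcard)
  rw [← sum_facetSum_powersetCard, sum_congr rfl facetSum_eq, sum_const, card_powersetCard]

lemma not_hasBlueStar_facetSumColoring [DecidableEq A] {N n : ℕ} {c : A} {φ : Finset (Fin N) → A}
    (hφ : ∀ v, ∀ S : Finset (Fin N), v ∉ S → #S = n →
      ∃ e ∈ S.powersetCard 2, facetSum φ (insert v e) = c) :
    ¬ HasBlueStar N n (facetSumColoring φ c) := by
  rintro ⟨v, S, hv, hS, hblue⟩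
  obtain ⟨e, he, hsum⟩ := hφ v S hv hS
  obtain ⟨heS, hcard⟩ := mem_powersetCard.1 he
  obtain ⟨a, b, hab, rfl⟩ := card_eq_two.1 hcard
  exact of_decide_eq_false (hblue a (heS (by simp)) b (heS (by simp)) hab) hsum

end FacetSum

section Counting

lemma card_le_of_forall_apply_ne {ι α : Type*} [Fintype ι] [DecidableEq ι] [Fintype α]
    (E : Finset ι) (F : (ι → α) → ι → α)
    (hF : ∀ φ ψ : ι → α, (∀ i ∉ E, φ i = ψ i) → ∀ e ∈ E, F φ e = F ψ e)
    (B : Finset (ι → α)) (hB : ∀ φ ∈ B, ∀ e ∈ E, φ e ≠ F φ e) :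
    #B ≤ (Fintype.card α - 1) ^ #E * Fintype.card α ^ #Eᶜ := by
  classical
  let restrict (φ : ι → α) : (Eᶜ : Finset ι) → α := fun i => φ i
  have eq_off_E {φ ψ : ι → α} (h : restrict φ = restrict ψ) (i : ι) (hi : i ∉ E) : φ i = ψ i :=
    congrFun h ⟨i, mem_compl.2 hi⟩
  have card_fiber_le : ∀ ρ ∈ B.image restrict,
      #{φ ∈ B | restrict φ = ρ} ≤ (Fintype.card α - 1) ^ #E := by
    intro ρ hρ
    obtain ⟨ψ, -, rfl⟩ := mem_image.1 hρ
    calc #{φ ∈ B | restrict φ = restrict ψ}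
        ≤ #(Fintype.piFinset fun e : E => univ.erase (F ψ e)) := by
          refine card_le_card_of_injOn (fun φ e => φ e) ?_ ?_
          · intro φ hφ
            obtain ⟨hφB, hφψ⟩ := mem_filter.1 hφ
            refine Fintype.mem_piFinset.2 fun e => mem_erase.2 ⟨?_, mem_univ _⟩
            rw [← hF φ ψ (eq_off_E hφψ) e e.2]
            exact hB φ hφB e e.2
          · intro φ hφ φ' hφ' heq
            have hoff := eq_off_E ((mem_filter.1 hφ).2.trans (mem_filter.1 hφ').2.symm)
            funext i
            by_cases hi : i ∈ E
            · exact congrFun heq ⟨i, hi⟩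
            · exact hoff i hi
      _ = (Fintype.card α - 1) ^ #E := by simp [Fintype.card_piFinset, card_erase_of_mem]
  calc #B ≤ (Fintype.card α - 1) ^ #E * #(B.image restrict) :=
        card_le_mul_card_image B _ card_fiber_le
    _ ≤ (Fintype.card α - 1) ^ #E * Fintype.card α ^ #Eᶜ := by
        gcongr
        exact (card_le_univ _).trans_eq (by rw [Fintype.card_fun, Fintype.card_coe])

lemma exists_forall_notMem_of_card_mul_le {ι Ω : Type*} [Fintype Ω] [Nonempty Ω] (I : Finset ι)
    (bad : ι → Finset Ω) {b d : ℕ} (hbad : ∀ i ∈ I, #(bad i) * d ≤ b * Fintype.card Ω)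
    (h : #I * b < d) : ∃ ω, ∀ i ∈ I, ω ∉ bad i := by
  classical
  have card_biUnion_lt : #(I.biUnion bad) < #(univ : Finset Ω) := by
    refine lt_of_mul_lt_mul_right ?_ d.zero_le
    calc #(I.biUnion bad) * d
        ≤ ∑ i ∈ I, #(bad i) * d := by
          rw [← sum_mul]
          exact Nat.mul_le_mul_right d card_biUnion_le
      _ ≤ #I * (b * Fintype.card Ω) := sum_le_card_nsmul _ _ _ hbad
      _ = #I * b * Fintype.card Ω := (mul_assoc _ _ _).symm
      _ < d * Fintype.card Ω := Nat.mul_lt_mul_of_pos_right h Fintype.card_pos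
      _ = #(univ : Finset Ω) * d := by rw [card_univ, mul_comm]
  obtain ⟨ω, -, hω⟩ := exists_mem_notMem_of_card_lt_card card_biUnion_lt
  exact ⟨ω, fun i hi hmem => hω (mem_biUnion.2 ⟨i, hi, hmem⟩)⟩

variable {V A : Type*} [Fintype V] [DecidableEq V] [AddCommGroup A] [Fintype A]

lemma card_facetSum_insert_ne_mul_le [DecidableEq A] (c : A) {v : V} {E : Finset (Finset V)}
    (hv : ∀ e ∈ E, v ∉ e) :
    #{φ : Finset V → A | ∀ e ∈ E, facetSum φ (insert v e) ≠ c} * Fintype.card A ^ #E ≤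
      (Fintype.card A - 1) ^ #E * Fintype.card (Finset V → A) := by
  have card_le : #{φ : Finset V → A | ∀ e ∈ E, facetSum φ (insert v e) ≠ c} ≤
      (Fintype.card A - 1) ^ #E * Fintype.card A ^ #Eᶜ := by
    refine card_le_of_forall_apply_ne E
      (fun φ e => c - ∑ x ∈ e, φ ((insert v e).erase x)) ?_ _ ?_
    · intro φ ψ hφψ e he
      refine congrArg (c - ·) (sum_congr rfl fun x hx => hφψ _ fun hmem => hv _ hmem ?_)
      exact mem_erase.2 ⟨fun hvx => hv e he (hvx ▸ hx), mem_insert_self v e⟩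
    · intro φ hφ e he heq
      apply (mem_filter.1 hφ).2 e he
      rw [facetSum_insert φ (hv e he), heq, sub_add_cancel]
  refine (Nat.mul_le_mul_right _ card_le).trans_eq ?_
  rw [mul_assoc, ← pow_add, card_compl_add_card, Fintype.card_fun]

lemma exists_forall_exists_facetSum_insert_eq (c : A) {n k : ℕ}
    (h : Fintype.card V * (Fintype.card V - 1).choose n * (Fintype.card A - 1) ^ n.choose k <
      Fintype.card A ^ n.choose k) :
    ∃ φ : Finset V → A, ∀ v, ∀ S : Finset V, v ∉ S → #S = n →
      ∃ e ∈ S.powersetCard k, facetSum φ (insert v e) = c := by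
  classical
  let stars : Finset (Σ _ : V, Finset V) := univ.sigma fun v => powersetCard n {v}ᶜ
  let bad (p : Σ _ : V, Finset V) : Finset (Finset V → A) :=
    {φ | ∀ e ∈ p.2.powersetCard k, facetSum φ (insert p.1 e) ≠ c}
  have mem_stars {v : V} {S : Finset V} : ⟨v, S⟩ ∈ stars ↔ v ∉ S ∧ #S = n := by
    simp [stars, mem_powersetCard]
  have card_stars : #stars = Fintype.card V * (Fintype.card V - 1).choose n := by
    simp [stars, card_compl]
  have card_bad_mul_le : ∀ p ∈ stars, #(bad p) * Fintype.card A ^ n.choose k ≤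
      (Fintype.card A - 1) ^ n.choose k * Fintype.card (Finset V → A) := by
    rintro ⟨v, S⟩ hp
    obtain ⟨hv, rfl⟩ := mem_stars.1 hp
    rw [← card_powersetCard]
    exact card_facetSum_insert_ne_mul_le c fun e he hve => hv ((mem_powersetCard.1 he).1 hve)
  obtain ⟨φ, hφ⟩ :=
    exists_forall_notMem_of_card_mul_le stars bad card_bad_mul_le (by rwa [card_stars])
  refine ⟨φ, fun v S hv hS => ?_⟩
  by_contra! hne
  exact hφ ⟨v, S⟩ (mem_stars.2 ⟨hv, hS⟩) (mem_filter.2 ⟨mem_univ φ, hne⟩)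

end Counting

section Estimates

lemma three_halves_pow_lt_factorial {n : ℕ} (hn : 3 ≤ n) : (3 / 2 : ℝ) ^ n < n.factorial := by
  induction n, hn using Nat.le_induction with
  | base => norm_num [Nat.factorial]
  | succ k hk ih =>
    have hk' : (3 / 2 : ℝ) < (k + 1 : ℕ) := by
      have : (3 : ℝ) ≤ k := by exact_mod_cast hk
      push_cast
      linarith
    rw [pow_succ', Nat.factorial_succ, Nat.cast_mul]
    gcongr

lemma rpow_half_pow_succ {x : ℝ} (hx : 0 ≤ x) (n : ℕ) :
    (x ^ ((n : ℝ) / 2)) ^ (n + 1) = x ^ (n + 1).choose 2 := by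
  rw [← Real.rpow_natCast, ← Real.rpow_mul hx, ← Real.rpow_natCast, Nat.cast_choose_two]
  congr 1
  push_cast
  ring

lemma mul_choose_lt_pow_choose_two {x : ℝ} {n N : ℕ} (hx : 0 < x) (hxn : x ^ n < n.factorial)
    (hN : (N : ℝ) ≤ x ^ ((n : ℝ) / 2)) :
    (N : ℝ) * (N - 1).choose n < x ^ n.choose 2 := by
  have choose_mul_factorial_le : (N - 1).choose n * n.factorial ≤ N ^ n := by
    rw [mul_comm, ← Nat.descFactorial_eq_factorial_mul_choose]
    exact (Nat.descFactorial_le_pow _ _).trans (Nat.pow_le_pow_left (N.sub_le 1) n)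
  have choose_two_succ : (n + 1).choose 2 = n.choose 2 + n := by
    rw [Nat.choose_succ_succ' n 1, Nat.choose_one_right, add_comm]
  refine lt_of_mul_lt_mul_right ?_ n.factorial.cast_nonneg
  calc (N : ℝ) * (N - 1).choose n * n.factorial
      = N * ((N - 1).choose n * n.factorial : ℕ) := by push_cast; ring
    _ ≤ N * (N ^ n : ℕ) := by gcongr
    _ = (N : ℝ) ^ (n + 1) := by push_cast; ring
    _ ≤ (x ^ ((n : ℝ) / 2)) ^ (n + 1) := by gcongr
    _ = x ^ n.choose 2 * x ^ n := by rw [rpow_half_pow_succ hx.le, choose_two_succ, pow_add]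
    _ < x ^ n.choose 2 * n.factorial := by gcongr

end Estimates

/-- For every `n ≥ 5` and every positive `N` with `N ≤ (3/2)^(n/2)`, there is a
2-coloring of `K_N^(3)` with no red `K₅^(3)` and no blue `Sₙ`. -/
theorem K5_star_explicit_lower :
    ∀ n : ℕ, 5 ≤ n → ∀ N : ℕ, 0 < N → (N : ℝ) ≤ (3 / 2 : ℝ) ^ ((n : ℝ) / 2) →
      ∃ χ : Finset (Fin N) → Bool, ¬ HasRedClique3 N 5 χ ∧ ¬ HasBlueStar N n χ := by
  intro n hn N _ hN
  have real_bound : (N : ℝ) * (N - 1).choose n < (3 / 2) ^ n.choose 2 :=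
    mul_choose_lt_pow_choose_two (by norm_num) (three_halves_pow_lt_factorial (by omega)) hN
  have nat_bound : N * (N - 1).choose n * 2 ^ n.choose 2 < 3 ^ n.choose 2 := by
    rw [div_pow, lt_div_iff₀ (by positivity)] at real_bound
    exact_mod_cast real_bound
  obtain ⟨φ, hφ⟩ := exists_forall_exists_facetSum_insert_eq (V := Fin N) (1 : ZMod 3) (k := 2)
    (by simpa [ZMod.card] using nat_bound)
  exact ⟨facetSumColoring φ 1, not_hasRedClique3_facetSumColoring (by decide) φ,
    not_hasBlueStar_facetSumColoring hφ⟩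
end

section
/- There exists a constant c > 0 such that for all sufficiently large n, gr(Γ_{2,2}, K_n) ≥ 2^{c·(log n)²}; that is, for N = ⌊2^{c·(log n)²}⌋ there exists a red/blue edge-coloring of Γ_{N,N} containing no red rectangle and no blue K_n. -/
/-- Adjacency in the grid graph `K_m □ K_n`: two distinct vertices are adjacent iff they
agree in exactly one coordinate. -/
def GridAdj {m n : ℕ} (p q : Fin m × Fin n) : Prop :=
  (p.1 = q.1 ∧ p.2 ≠ q.2) ∨ (p.1 ≠ q.1 ∧ p.2 = q.2)

/-- A red rectangle in an edge-coloring of `Γ_{N,M}` (red = `true`). -/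
def HasRedRect (N M : ℕ) (χ : Sym2 (Fin N × Fin M) → Bool) : Prop :=
  ∃ x x' : Fin N, ∃ y y' : Fin M, x ≠ x' ∧ y ≠ y' ∧
    χ s((x, y), (x', y)) = true ∧ χ s((x, y'), (x', y')) = true ∧
    χ s((x, y), (x, y')) = true ∧ χ s((x', y), (x', y')) = true

/-- A blue `K_n` in an edge-coloring of `Γ_{N,M}`: `n` pairwise-adjacent vertices with
all edges between them blue (blue = `false`). -/
def HasBlueGridClique (N M n : ℕ) (χ : Sym2 (Fin N × Fin M) → Bool) : Prop :=
  ∃ S : Finset (Fin N × Fin M), S.card = n ∧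
    ∀ p ∈ S, ∀ q ∈ S, p ≠ q → GridAdj p q ∧ χ s(p, q) = false

/-!
Give every column `x` a codeword `f x : ι → κ` and every row `y` a word `g y : ι → γ`, where
distinct columns have codewords agreeing in few coordinates and distinct rows have distinct words.
Each pair of columns gets a random word `w : ι → γ`, and its edge in row `y` is red iff `g y` and
`w` coincide wherever the two codewords agree. Each pair of rows is assigned a coordinate `i` at
which its words differ and a random letter `u : κ`, and its edge in column `x` is red iff
`f x i = u`.

In a red rectangle both columns carry the letter `u` at `i`, so their codewords agree there; the
horizontal red edges then force both row words to equal `w i` at `i`, contradicting the choice of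
`i`. Within a single row or column the edges are red independently, each with probability at least
`1 / R`, so a given set of `n` vertices spans a blue `K_n` with probability at most
`(1 - 1 / R) ^ (n.choose 2)`. Taking Reed–Solomon codewords of length `k ^ 2` over a field with
`R = 4 ^ k` elements, with fewer than `k` agreements, together with binary words of length `k ^ 2`,
a union bound handles grids of side `2 ^ (k ^ 2)` as soon as `n ≥ 64 ^ k`.
-/

open Finset

/-! ### Random labellings -/

theorem card_piFinset_le_of_card_le_mul {E Ω : Type*} [Fintype E] [DecidableEq E] [Fintype Ω]
    {q : ℝ} {F : Finset E} {B : E → Finset Ω} (hB : ∀ e ∈ F, (#(B e) : ℝ) ≤ q * Fintype.card Ω) :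
    (#(Fintype.piFinset fun e ↦ if e ∈ F then B e else univ) : ℝ) ≤
      q ^ #F * Fintype.card (E → Ω) := by
  calc (#(Fintype.piFinset fun e ↦ if e ∈ F then B e else univ) : ℝ)
      = ∏ e, if e ∈ F then (#(B e) : ℝ) else Fintype.card Ω := by
        simp [apply_ite card, apply_ite (Nat.cast (R := ℝ))]
    _ ≤ ∏ e, (if e ∈ F then q else 1) * (Fintype.card Ω : ℝ) := by
        refine prod_le_prod (fun e _ ↦ by positivity) fun e _ ↦ ?_
        split_ifs with he
        · exact hB e he
        · simp
    _ = q ^ #F * Fintype.card (E → Ω) := by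
        rw [prod_mul_distrib, prod_ite_mem, univ_inter, prod_const, prod_const, card_univ,
          Fintype.card_fun, Nat.cast_pow]

theorem exists_forall_exists_notMem_of_card_mul_pow_lt_one {J E Ω : Type*} [Fintype J] [Finite E]
    [Fintype Ω] [Nonempty Ω] {m : ℕ} {q : ℝ} {F : J → Finset E} {B : J → E → Finset Ω}
    (hF : ∀ j, #(F j) = m) (hB : ∀ j, ∀ e ∈ F j, (#(B j e) : ℝ) ≤ q * Fintype.card Ω)
    (hq : Fintype.card J * q ^ m < 1) :
    ∃ w : E → Ω, ∀ j, ∃ e ∈ F j, w e ∉ B j e := by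
  classical
  cases nonempty_fintype E
  by_contra! hbad
  let bad (j : J) : Finset (E → Ω) := Fintype.piFinset fun e ↦ if e ∈ F j then B j e else univ
  have hcover : (univ : Finset (E → Ω)) ⊆ univ.biUnion bad := by
    intro w _
    obtain ⟨j, hj⟩ := hbad w
    refine mem_biUnion.2 ⟨j, mem_univ j, Fintype.mem_piFinset.2 fun e ↦ ?_⟩
    split_ifs with he
    · exact hj e he
    · exact mem_univ _
  have hcard_pos : (0 : ℝ) < Fintype.card (E → Ω) := by exact_mod_cast Fintype.card_pos
  have hle : (Fintype.card (E → Ω) : ℝ) ≤ Fintype.card J * q ^ m * Fintype.card (E → Ω) :=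
    calc (Fintype.card (E → Ω) : ℝ)
        ≤ ∑ j, (#(bad j) : ℝ) := by exact_mod_cast (card_le_card hcover).trans card_biUnion_le
      _ ≤ ∑ _j : J, q ^ m * Fintype.card (E → Ω) :=
          sum_le_sum fun j _ ↦ hF j ▸ card_piFinset_le_of_card_le_mul (hB j)
      _ = Fintype.card J * q ^ m * Fintype.card (E → Ω) := by
          rw [sum_const, card_univ, nsmul_eq_mul, mul_assoc]
  exact hle.not_gt (mul_lt_of_lt_one_left hcard_pos hq)

theorem card_filter_not_le_one_sub_one_div_mul_card {Ω : Type*} [Fintype Ω] [Nonempty Ω]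
    {P : Ω → Prop} [DecidablePred P] {R : ℕ} (hP : Fintype.card Ω ≤ R * #{ω | P ω}) :
    (#{ω | ¬ P ω} : ℝ) ≤ (1 - 1 / R) * Fintype.card Ω := by
  have hR : (0 : ℝ) < R := by
    exact_mod_cast Nat.pos_of_mul_pos_right (Fintype.card_pos.trans_le hP)
  have hgood : (Fintype.card Ω : ℝ) / R ≤ #{ω | P ω} := by
    rw [div_le_iff₀' hR]
    exact_mod_cast hP
  have hsum : (#{ω | P ω} : ℝ) + #{ω | ¬ P ω} = Fintype.card Ω := by
    exact_mod_cast card_filter_add_card_filter_not (s := univ) P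
  linear_combination hsum + hgood

theorem exists_forall_indepSetFree_fromEdgeSet {V Y Ω : Type*} [Fintype V] [Fintype Y] [Fintype Ω]
    [Nonempty Ω] {P : Y → Sym2 V → Ω → Prop} [∀ y e, DecidablePred (P y e)] {R n : ℕ}
    (hP : ∀ y e, ¬ e.IsDiag → Fintype.card Ω ≤ R * #{ω | P y e ω})
    (hn : Fintype.card Y * (Fintype.card V).choose n * (1 - 1 / R : ℝ) ^ n.choose 2 < 1) :
    ∃ w : Sym2 V → Ω, ∀ y, (SimpleGraph.fromEdgeSet {e | P y e (w e)}).IndepSetFree n := by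
  classical
  have hcard : Fintype.card (Y × powersetCard n (univ : Finset V)) =
      Fintype.card Y * (Fintype.card V).choose n := by
    simp
  obtain ⟨w, hw⟩ := exists_forall_exists_notMem_of_card_mul_pow_lt_one (q := 1 - 1 / (R : ℝ))
    (F := fun j : Y × powersetCard n (univ : Finset V) ↦ j.2.1.offDiag.image Sym2.mk.uncurry)
    (B := fun j e ↦ {ω | ¬ P j.1 e ω})
    (fun j ↦ by rw [Sym2.card_image_offDiag, mem_powersetCard_univ.1 j.2.2])
    (fun j e he ↦ card_filter_not_le_one_sub_one_div_mul_card (hP j.1 e (by aesop)))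
    (by rw [hcard]; exact_mod_cast hn)
  refine ⟨w, fun y S hS ↦ ?_⟩
  obtain ⟨e, he, hred⟩ := hw (y, ⟨S, mem_powersetCard_univ.2 hS.card_eq⟩)
  simp only [mem_image, mem_offDiag, Prod.exists, Function.uncurry_apply_pair] at he
  obtain ⟨a, b, ⟨ha, hb, hab⟩, rfl⟩ := he
  simp only [mem_filter, mem_univ, true_and, not_not] at hred
  exact hS.isIndepSet ha hb hab ((SimpleGraph.fromEdgeSet_adj _).2 ⟨hred, hab⟩)

/-! ### Colorings of the grid -/

/-- The graph on a grid with prescribed edges `H y` within each row `y` and `V x` within each column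
`x`; for constant `H` and `V` it is the box product. -/
def gridGraph {α β : Type*} (H : β → SimpleGraph α) (V : α → SimpleGraph β) :
    SimpleGraph (α × β) where
  Adj p q := p.2 = q.2 ∧ (H p.2).Adj p.1 q.1 ∨ p.1 = q.1 ∧ (V p.1).Adj p.2 q.2
  symm.symm p q := by
    rintro (⟨h, hadj⟩ | ⟨h, hadj⟩)
    · exact .inl ⟨h.symm, h ▸ hadj.symm⟩
    · exact .inr ⟨h.symm, h ▸ hadj.symm⟩

open Classical in
/-- The coloring of the grid in which exactly the edges of `gridGraph H V` are red. -/
noncomputable def gridColoring {α β : Type*} (H : β → SimpleGraph α) (V : α → SimpleGraph β)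
    (e : Sym2 (α × β)) : Bool :=
  decide (e ∈ (gridGraph H V).edgeSet)

theorem gridColoring_row {α β : Type*} {H : β → SimpleGraph α} {V : α → SimpleGraph β}
    {x x' : α} {y : β} : gridColoring H V s((x, y), (x', y)) = true ↔ (H y).Adj x x' := by
  simp only [gridColoring, decide_eq_true_eq, SimpleGraph.mem_edgeSet]
  simp [gridGraph]

theorem gridColoring_column {α β : Type*} {H : β → SimpleGraph α} {V : α → SimpleGraph β}
    {x : α} {y y' : β} : gridColoring H V s((x, y), (x, y')) = true ↔ (V x).Adj y y' := by
  simp only [gridColoring, decide_eq_true_eq, SimpleGraph.mem_edgeSet]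
  simp [gridGraph]

theorem forall_fst_eq_or_forall_snd_eq_of_pairwise_gridAdj {m n : ℕ}
    {S : Set (Fin m × Fin n)} (hS : S.Pairwise GridAdj) {p : Fin m × Fin n} (hp : p ∈ S) :
    (∀ q ∈ S, q.1 = p.1) ∨ ∀ q ∈ S, q.2 = p.2 := by
  by_contra! h
  obtain ⟨⟨q, hq, hqp⟩, r, hr, hrp⟩ := h
  have hadj_q : GridAdj q p := hS hq hp (by grind)
  have hadj_r : GridAdj r p := hS hr hp (by grind)
  have hadj_qr : GridAdj q r := hS hq hr (by grind [GridAdj])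
  grind [GridAdj]

theorem not_hasBlueGridClique_gridColoring {N M n : ℕ} {H : Fin M → SimpleGraph (Fin N)}
    {V : Fin N → SimpleGraph (Fin M)} (hn : n ≠ 0) (hH : ∀ y, (H y).IndepSetFree n)
    (hV : ∀ x, (V x).IndepSetFree n) :
    ¬ HasBlueGridClique N M n (gridColoring H V) := by
  rintro ⟨S, hcard, hS⟩
  obtain ⟨p, hp⟩ : S.Nonempty := card_ne_zero.1 (hcard ▸ hn)
  have hadj : (S : Set (Fin N × Fin M)).Pairwise GridAdj := fun a ha b hb hab ↦ (hS a ha b hb hab).1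
  rcases forall_fst_eq_or_forall_snd_eq_of_pairwise_gridAdj hadj hp with hcol | hrow
  · have hinj : Set.InjOn Prod.snd (S : Set (Fin N × Fin M)) := fun a ha b hb hab ↦
      Prod.ext ((hcol a ha).trans (hcol b hb).symm) hab
    refine hV p.1 (S.image Prod.snd) ⟨?_, (card_image_of_injOn hinj).trans hcard⟩
    rw [coe_image]
    rintro _ ⟨⟨x, y⟩, hy, rfl⟩ _ ⟨⟨x', y'⟩, hy', rfl⟩ hne hred
    obtain rfl : x = p.1 := hcol _ hy
    obtain rfl : x' = p.1 := hcol _ hy'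
    have hblue := (hS _ hy _ hy' (by simpa using hne)).2
    simp [gridColoring_column.2 hred] at hblue
  · have hinj : Set.InjOn Prod.fst (S : Set (Fin N × Fin M)) := fun a ha b hb hab ↦
      Prod.ext hab ((hrow a ha).trans (hrow b hb).symm)
    refine hH p.2 (S.image Prod.fst) ⟨?_, (card_image_of_injOn hinj).trans hcard⟩
    rw [coe_image]
    rintro _ ⟨⟨x, y⟩, hx, rfl⟩ _ ⟨⟨x', y'⟩, hx', rfl⟩ hne hred
    obtain rfl : y = p.2 := hrow _ hx
    obtain rfl : y' = p.2 := hrow _ hx'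
    have hblue := (hS _ hx _ hx' (by simpa using hne)).2
    simp [gridColoring_row.2 hred] at hblue

/-! ### Codes -/

section Code

variable {α β ι κ γ : Type*}

/-- The coordinates at which the two codewords `f x` and `f y` of a pair `e = s(x, y)` agree; they
agree at `i` iff applying `f · i` to both members of `e` gives a diagonal pair. -/
def agreementSet [Fintype ι] [DecidableEq κ] (f : α → ι → κ) (e : Sym2 α) : Finset ι :=
  {i | (e.map (f · i)).IsDiag}

@[simp]
theorem mem_agreementSet_mk [Fintype ι] [DecidableEq κ] {f : α → ι → κ} {x y : α} {i : ι} :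
    i ∈ agreementSet f s(x, y) ↔ f x i = f y i := by
  simp [agreementSet]

/-- The red edges of a row with word `v`, when the columns have codewords `f` and the pairs of
columns have labels `w`. -/
def rowGraph [Fintype ι] [DecidableEq κ] (f : α → ι → κ) (w : Sym2 α → ι → γ) (v : ι → γ) :
    SimpleGraph α :=
  SimpleGraph.fromEdgeSet {e | ∀ i ∈ agreementSet f e, v i = w e i}

/-- The red edges of a column with codeword `c`, when every pair `e` of rows has a coordinate `δ e`
and a label `u e`. -/
def columnGraph (δ : Sym2 β → ι) (u : Sym2 β → κ) (c : ι → κ) : SimpleGraph β :=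
  SimpleGraph.fromEdgeSet {e | c (δ e) = u e}

theorem not_hasRedRect_gridColoring [Fintype ι] [DecidableEq κ] [DecidableEq γ] {N M : ℕ}
    {f : Fin N → ι → κ} {g : Fin M → ι → γ} {w : Sym2 (Fin N) → ι → γ} {u : Sym2 (Fin M) → κ}
    {δ : Sym2 (Fin M) → ι} (hδ : ∀ e, ¬ e.IsDiag → δ e ∉ agreementSet g e) :
    ¬ HasRedRect N M
      (gridColoring (fun y ↦ rowGraph f w (g y)) fun x ↦ columnGraph δ u (f x)) := by
  rintro ⟨x, x', y, y', -, hy, hrow, hrow', hcol, hcol'⟩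
  simp only [gridColoring_row, gridColoring_column, rowGraph, columnGraph,
    SimpleGraph.fromEdgeSet_adj, Set.mem_ofPred_eq] at hrow hrow' hcol hcol'
  have hagree : δ s(y, y') ∈ agreementSet f s(x, x') :=
    mem_agreementSet_mk.2 (hcol.1.trans hcol'.1.symm)
  have heq : g y (δ s(y, y')) = g y' (δ s(y, y')) :=
    (hrow.1 _ hagree).trans (hrow'.1 _ hagree).symm
  exact hδ s(y, y') (by simpa using hy) (mem_agreementSet_mk.2 heq)

theorem exists_forall_notMem_agreementSet [Fintype ι] [Nonempty ι] [DecidableEq γ] {g : β → ι → γ}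
    (hg : Function.Injective g) :
    ∃ δ : Sym2 β → ι, ∀ e, ¬ e.IsDiag → δ e ∉ agreementSet g e := by
  have hdiff (e : Sym2 β) (he : ¬ e.IsDiag) : ∃ i, i ∉ agreementSet g e := by
    induction e with
    | _ y y' => simpa [Function.ne_iff] using hg.ne (Sym2.mk_isDiag_iff.not.1 he)
  choose! δ hδ using hdiff
  exact ⟨δ, hδ⟩

theorem card_filter_forall_mem_eq [Fintype ι] [DecidableEq ι] [Fintype γ] (s : Finset ι)
    (v : ι → γ) [DecidablePred fun w : ι → γ ↦ ∀ i ∈ s, v i = w i] :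
    #{w : ι → γ | ∀ i ∈ s, v i = w i} = Fintype.card γ ^ #sᶜ := by
  classical
  have hpi : ({w : ι → γ | ∀ i ∈ s, v i = w i} : Finset (ι → γ)) =
      Fintype.piFinset fun i ↦ if i ∈ s then {v i} else univ := by
    ext w
    simp only [mem_filter, mem_univ, true_and, Fintype.mem_piFinset]
    exact forall_congr' fun i ↦ by split_ifs with hi <;> simp [hi, eq_comm]
  simp [hpi, apply_ite card, prod_ite, filter_notMem_eq_sdiff, compl_eq_univ_sdiff]

theorem exists_forall_indepSetFree_rowGraph [Fintype α] [Fintype β] [Fintype ι] [DecidableEq κ]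
    [Fintype γ] [Nonempty γ] {f : α → ι → κ} (g : β → ι → γ) {d R n : ℕ}
    (hf : ∀ e, ¬ e.IsDiag → #(agreementSet f e) ≤ d) (hR : Fintype.card γ ^ d ≤ R)
    (hn : Fintype.card β * (Fintype.card α).choose n * (1 - 1 / R : ℝ) ^ n.choose 2 < 1) :
    ∃ w, ∀ y, (rowGraph f w (g y)).IndepSetFree n := by
  classical
  refine exists_forall_indepSetFree_fromEdgeSet
    (P := fun y e (v : ι → γ) ↦ ∀ i ∈ agreementSet f e, g y i = v i) (fun y e he ↦ ?_) hn
  rw [card_filter_forall_mem_eq, Fintype.card_fun, ← card_add_card_compl (agreementSet f e),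
    pow_add]
  gcongr
  exact (Nat.pow_le_pow_right Fintype.card_pos (hf e he)).trans hR

theorem exists_forall_indepSetFree_columnGraph [Fintype α] [Fintype β] [Fintype κ] [Nonempty κ]
    (f : α → ι → κ) (δ : Sym2 β → ι) {R n : ℕ} (hR : Fintype.card κ ≤ R)
    (hn : Fintype.card α * (Fintype.card β).choose n * (1 - 1 / R : ℝ) ^ n.choose 2 < 1) :
    ∃ u, ∀ x, (columnGraph δ u (f x)).IndepSetFree n := by
  classical
  exact exists_forall_indepSetFree_fromEdgeSet (fun x e _ ↦ by simpa [filter_eq] using hR) hn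

theorem exists_coloring_of_code [Fintype ι] [Nonempty ι] [Fintype κ] [DecidableEq κ] [Nonempty κ]
    [Fintype γ] [Nonempty γ] {N M d R n : ℕ} {f : Fin N → ι → κ} {g : Fin M → ι → γ}
    (hf : ∀ e, ¬ e.IsDiag → #(agreementSet f e) ≤ d) (hg : Function.Injective g)
    (hγ : Fintype.card γ ^ d ≤ R) (hκ : Fintype.card κ ≤ R) (hn : n ≠ 0)
    (hrow : M * N.choose n * (1 - 1 / R : ℝ) ^ n.choose 2 < 1)
    (hcol : N * M.choose n * (1 - 1 / R : ℝ) ^ n.choose 2 < 1) :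
    ∃ χ : Sym2 (Fin N × Fin M) → Bool, ¬ HasRedRect N M χ ∧ ¬ HasBlueGridClique N M n χ := by
  classical
  obtain ⟨δ, hδ⟩ := exists_forall_notMem_agreementSet hg
  obtain ⟨w, hw⟩ := exists_forall_indepSetFree_rowGraph g hf hγ (by simpa using hrow)
  obtain ⟨u, hu⟩ := exists_forall_indepSetFree_columnGraph f δ hκ (by simpa using hcol)
  exact ⟨_, not_hasRedRect_gridColoring hδ, not_hasBlueGridClique_gridColoring hn hw hu⟩

open Polynomial in
theorem exists_card_agreementSet_lt [Fintype α] [Fintype ι] [Field κ] [Fintype κ] [DecidableEq κ]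
    {d : ℕ} (hι : Fintype.card ι ≤ Fintype.card κ) (hα : Fintype.card α ≤ Fintype.card κ ^ d) :
    ∃ f : α → ι → κ, ∀ e, ¬ e.IsDiag → #(agreementSet f e) < d := by
  obtain ⟨v⟩ : Nonempty (ι ↪ κ) := Function.Embedding.nonempty_of_card_le hι
  obtain ⟨coeffs⟩ : Nonempty (α ↪ (Fin d → κ)) :=
    Function.Embedding.nonempty_of_card_le (by simpa using hα)
  let p : α ↪ degreeLT κ d := coeffs.trans (degreeLTEquiv κ d).symm.toEquiv.toEmbedding
  refine ⟨fun x i ↦ (p x : κ[X]).eval (v i), fun e he ↦ ?_⟩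
  induction e with
  | _ x y =>
    by_contra! hd
    have hdeg (z : α) :
        (p z : κ[X]).degree < #(agreementSet (fun x i ↦ (p x : κ[X]).eval (v i)) s(x, y)) :=
      (mem_degreeLT.1 (p z).2).trans_le (by exact_mod_cast hd)
    have hpoly : (p x : κ[X]) = p y :=
      eq_of_degrees_lt_of_eval_index_eq _ v.injective.injOn (hdeg x) (hdeg y)
        fun i hi ↦ mem_agreementSet_mk.1 hi
    exact he (Sym2.mk_isDiag_iff.2 (p.injective (Subtype.ext hpoly)))

end Code

/-! ### Choice of parameters -/

theorem one_sub_one_div_pow_le_half {R : ℕ} (hR : R ≠ 0) : (1 - 1 / R : ℝ) ^ R ≤ 1 / 2 :=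
  (Real.one_sub_div_pow_le_exp_neg (by exact_mod_cast Nat.one_le_iff_ne_zero.2 hR)).trans
    Real.exp_neg_one_lt_half.le

theorem mul_choose_mul_one_sub_one_div_pow_lt_one {N a n R m : ℕ} (hR : R ≠ 0) (hN : N ≤ 2 ^ a)
    (hm : R * (a * (n + 1) + 1) ≤ m) : N * N.choose n * (1 - 1 / R : ℝ) ^ m < 1 := by
  have hR1 : (1 : ℝ) ≤ R := by exact_mod_cast Nat.one_le_iff_ne_zero.2 hR
  have hq0 : (0 : ℝ) ≤ 1 - 1 / R := sub_nonneg.2 (div_le_one_of_le₀ hR1 (by positivity))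
  have hq1 : (1 - 1 / R : ℝ) ≤ 1 := sub_le_self _ (by positivity)
  have hchoose : N * N.choose n ≤ 2 ^ (a * (n + 1)) :=
    calc N * N.choose n ≤ N * N ^ n := by gcongr; exact Nat.choose_le_pow N n
      _ = N ^ (n + 1) := by ring
      _ ≤ (2 ^ a) ^ (n + 1) := by gcongr
      _ = 2 ^ (a * (n + 1)) := (pow_mul 2 a (n + 1)).symm
  calc N * N.choose n * (1 - 1 / R : ℝ) ^ m
      ≤ 2 ^ (a * (n + 1)) * (1 - 1 / R : ℝ) ^ (R * (a * (n + 1) + 1)) :=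
        mul_le_mul (by exact_mod_cast hchoose) (pow_le_pow_of_le_one hq0 hq1 hm) (by positivity)
          (by positivity)
    _ ≤ 2 ^ (a * (n + 1)) * (1 / 2 : ℝ) ^ (a * (n + 1) + 1) := by
        rw [pow_mul _ R]
        gcongr
        exact one_sub_one_div_pow_le_half hR
    _ = 1 / 2 := by
        rw [pow_succ, ← mul_assoc, ← mul_pow]
        norm_num
    _ < 1 := by norm_num

theorem sq_lt_four_pow (k : ℕ) : k ^ 2 < 4 ^ k :=
  calc k ^ 2 < (2 ^ k) ^ 2 := Nat.pow_lt_pow_left Nat.lt_two_pow_self two_ne_zero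
    _ = 4 ^ k := by rw [← pow_mul, mul_comm, pow_mul]; norm_num

theorem four_pow_mul_le_choose_two {k n : ℕ} (hk : k ≠ 0) (hn : 64 ^ k ≤ n) :
    4 ^ k * (k ^ 2 * (n + 1) + 1) ≤ n.choose 2 := by
  have h4k : 4 ≤ 4 ^ k := Nat.le_self_pow hk 4
  have h64 : 64 ^ k = 4 ^ k * (4 ^ k * 4 ^ k) := by rw [← mul_pow, ← mul_pow]; norm_num
  have h16n : 4 * (4 ^ k * 4 ^ k) ≤ n := by
    calc 4 * (4 ^ k * 4 ^ k) ≤ 4 ^ k * (4 ^ k * 4 ^ k) := by gcongr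
      _ ≤ n := h64 ▸ hn
  obtain ⟨m, rfl⟩ : ∃ m, n = m + 3 := ⟨n - 3, by have := Nat.mul_le_mul h4k h4k; omega⟩
  rw [Nat.choose_two_right, Nat.le_div_iff_mul_le two_pos]
  calc 4 ^ k * (k ^ 2 * (m + 3 + 1) + 1) * 2
      ≤ 4 ^ k * ((k ^ 2 + 1) * (m + 4)) * 2 := by gcongr; nlinarith
    _ ≤ 4 ^ k * (4 ^ k * (m + 4)) * 2 := by gcongr; exact sq_lt_four_pow k
    _ ≤ 4 * (4 ^ k * 4 ^ k) * (m + 2) := by nlinarith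
    _ ≤ (m + 3) * (m + 3 - 1) := by gcongr; omega

theorem exists_pow_le_and_floor_rpow_logb_sq_le {n : ℕ} (hn : 64 ≤ n) :
    ∃ k ≠ 0, 64 ^ k ≤ n ∧ ⌊(2 : ℝ) ^ (1 / 144 * Real.logb 2 n ^ 2)⌋₊ ≤ 2 ^ k ^ 2 := by
  have hn0 : n ≠ 0 := by omega
  set k := Nat.log 64 n
  have hk : 1 ≤ k := (Nat.le_log_iff_pow_le (by norm_num) hn0).2 (by simpa using hn)
  have hlog_nonneg : 0 ≤ Real.logb 2 n :=
    Real.logb_nonneg one_lt_two (by exact_mod_cast Nat.one_le_iff_ne_zero.2 hn0)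
  have hlog : Real.logb 2 n ≤ 12 * k := by
    have hn_le : n ≤ 2 ^ (12 * k) :=
      calc n ≤ 64 ^ (k + 1) := (Nat.lt_pow_succ_log_self (by norm_num) n).le
        _ = 2 ^ (6 * (k + 1)) := by rw [pow_mul]; norm_num
        _ ≤ 2 ^ (12 * k) := Nat.pow_le_pow_right two_pos (by omega)
    rw [Real.logb_le_iff_le_rpow one_lt_two (by positivity)]
    exact_mod_cast hn_le
  refine ⟨k, by omega, Nat.pow_log_le_self 64 hn0, Nat.floor_le_of_le ?_⟩
  have hexp : 1 / 144 * Real.logb 2 n ^ 2 ≤ (k ^ 2 : ℕ) := by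
    push_cast
    nlinarith
  calc (2 : ℝ) ^ (1 / 144 * Real.logb 2 n ^ 2) ≤ 2 ^ ((k ^ 2 : ℕ) : ℝ) :=
        Real.rpow_le_rpow_of_exponent_le one_le_two hexp
    _ = (2 ^ k ^ 2 : ℕ) := by rw [Real.rpow_natCast]; norm_cast

theorem exists_coloring_of_pow_le {N n k : ℕ} (hk : k ≠ 0) (hN : N ≤ 2 ^ k ^ 2) (hn : 64 ^ k ≤ n) :
    ∃ χ : Sym2 (Fin N × Fin N) → Bool, ¬ HasRedRect N N χ ∧ ¬ HasBlueGridClique N N n χ := by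
  classical
  let K := GaloisField 2 (2 * k)
  have : Fintype K := Fintype.ofFinite K
  have : NeZero (k ^ 2) := ⟨pow_ne_zero 2 hk⟩
  have hK : Fintype.card K = 4 ^ k := by
    rw [Fintype.card_eq_nat_card, GaloisField.card 2 (2 * k) (by positivity), pow_mul]; norm_num
  have hNK : N ≤ (4 ^ k) ^ k := by
    calc N ≤ 2 ^ k ^ 2 := hN
      _ ≤ 4 ^ k ^ 2 := by gcongr; norm_num
      _ = (4 ^ k) ^ k := by rw [sq, pow_mul]
  obtain ⟨f, hf⟩ := exists_card_agreementSet_lt (α := Fin N) (ι := Fin (k ^ 2)) (κ := K) (d := k)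
    (by simpa [hK] using (sq_lt_four_pow k).le)
    (by simpa [hK] using hNK)
  obtain ⟨g⟩ : Nonempty (Fin N ↪ (Fin (k ^ 2) → Bool)) :=
    Function.Embedding.nonempty_of_card_le (by simpa using hN)
  have hunion : N * N.choose n * (1 - 1 / (4 ^ k : ℕ) : ℝ) ^ n.choose 2 < 1 :=
    mul_choose_mul_one_sub_one_div_pow_lt_one (by positivity) hN (four_pow_mul_le_choose_two hk hn)
  have hn0 : n ≠ 0 := ((pow_pos (by norm_num) k).trans_le hn).ne'
  exact exists_coloring_of_code (fun e he ↦ (hf e he).le) g.injective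
    (by simpa using Nat.pow_le_pow_left (by norm_num) k) hK.le hn0 hunion hunion

/-- There is `c > 0` such that for all sufficiently large `n`,
`gr(Γ₂,₂, K_n) ≥ 2^(c (log₂ n)²)`: for `N = ⌊2^(c (log₂ n)²)⌋` there is a red/blue
edge-coloring of `Γ_{N,N}` with no red rectangle and no blue `K_n`. -/
theorem lower_bound_grid_ramsey :
    ∃ c : ℝ, 0 < c ∧ ∃ n₀ : ℕ, ∀ n : ℕ, n₀ ≤ n →
      ∀ N : ℕ, N = ⌊(2 : ℝ) ^ (c * (Real.logb 2 n) ^ 2)⌋₊ →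
        ∃ χ : Sym2 (Fin N × Fin N) → Bool,
          ¬ HasRedRect N N χ ∧ ¬ HasBlueGridClique N N n χ := by
  refine ⟨1 / 144, by norm_num, 64, fun n hn N hN ↦ ?_⟩
  obtain ⟨k, hk, hkn, hNk⟩ := exists_pow_le_and_floor_rpow_logb_sq_le hn
  exact exists_coloring_of_pow_le hk (hN ▸ hNk) hkn
end
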